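/- There exists an absolute constant c ∈ ℕ such that the following holds for all n ≥ 1. Let g ∈ GL_n(ℚ) have entries of height at most h, where h ≥ 2, and let λ₁,…,λ_n ∈ ℚ̄ be the eigenvalues of g (the roots, with multiplicity, of its characteristic polynomial); note each λᵢ is nonzero. Then the subgroup L := {(k₁,…,k_n) ∈ ℤⁿ : λ₁^{k₁}⋯λ_n^{k_n} = 1} of ℤⁿ (with integer, possibly negative, exponents) is generated, as an additive subgroup of ℤⁿ, by a collection of vectors all of whose entries have absolute value at most (c·n⁷·n!·log₂ h)^n. -/

import Mathlib

noncomputable section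

open scoped MatrixGroups

/-- The field of algebraic numbers. -/
abbrev Qbar : Type := AlgebraicClosure ℚ

/-- The height of a rational number `a/b` in lowest terms is `max |a| b`. -/
def ratHeight (q : ℚ) : ℕ := max q.num.natAbs q.den

/-!
Let `K` be the splitting field of the characteristic polynomial, so `d = [K : ℚ] ≤ n!`, and let
`H` be `d` times the absolute logarithmic height, a seminorm on the `ℤ`-module `Kˣ`. Multiplying
an eigenvalue by a common denominator of the entries of `g` gives an algebraic integer whose
conjugates are bounded by the row sums, so `H` is at most `6 d n² log h` on the eigenvalues.

The map `k ↦ ∑ kᵢ [λᵢ]` from `ℤⁿ` to `Kˣ` has kernel `L`. Let `v ∈ L` be nonzero with largest entry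
`|v m|`. Dirichlet's theorem approximates `v / v m` by `u / t` with `t ≤ Q ^ (n - 1)` and error at
most `1 / (t Q)`; since `v` is a relation, `H` of the combination with coefficients `u` is at most
`Q⁻¹ ∑ H(λᵢ)`. If this is below the least positive value of `H`, the combination is torsion and, `W`
being the number of roots of unity of `K`, `W u` is a relation of size `W Q ^ (n - 1)` supported
inside the support of `v`. Applied to relations vanishing on all but one of a set of coordinates
that determines them, this yields a small echelon family of full rank; the remaining generators
of `L` are the relations whose coordinates are reduced modulo the pivots.

Non-torsion elements of `K` have `H ≥ 1 / (2 ^ 37 n ^ 4)`, by Dobrowolski's method. A non-integral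
element has `H ≥ log 2`. Let `α` be integral with minimal polynomial `f` of small Mahler measure.
The pigeonhole principle gives a polynomial `F` of small degree with small coefficients that
`f ^ T` divides. As `f(X ^ p) ≡ f ^ p` modulo a prime `p`, the norm of `F(α ^ p)` is divisible by
`p ^ (T deg f)`, which is too large unless `F(α ^ p) = 0`. For `p ∤ W` the `p`-th powers of the
conjugates of `α` are pairwise distinct, also for different `p` because `K` is Galois. Since
`φ(W) ≤ n!`, only `O(n²)` primes divide `W`, so there are enough primes of size `O(n³)` to give `F`
more zeros than its degree.
-/

section Lattice

variable {ι : Type*}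

theorem exists_nat_abs_mul_sub_lt [Fintype ι] (θ : ι → ℝ) {Q : ℕ} (hQ : 0 < Q) :
    ∃ t : ℕ, 0 < t ∧ t ≤ Q ^ Fintype.card ι ∧ ∃ p : ι → ℤ, ∀ i, |t * θ i - p i| < 1 / Q := by
  classical
  have hQ' : (0 : ℝ) < Q := Nat.cast_pos.mpr hQ
  have hbox (t : ℕ) (i : ι) : ⌊(Q : ℝ) * Int.fract (t * θ i)⌋₊ < Q :=
    (Nat.floor_lt (by positivity)).mpr (mul_lt_of_lt_one_right hQ' (Int.fract_lt_one _))
  let box : Fin (Q ^ Fintype.card ι + 1) → ι → Fin Q := fun t i => ⟨_, hbox t i⟩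
  obtain ⟨r, s, hrs, hbox_eq⟩ := Fintype.exists_ne_map_eq_of_card_lt box (by simp)
  wlog hlt : r < s generalizing r s with H
  · exact H s r hrs.symm hbox_eq.symm (lt_of_le_of_ne (not_lt.mp hlt) hrs.symm)
  have hlt' : (r : ℕ) < s := hlt
  refine ⟨s - r, by omega, by omega, fun i => ⌊s * θ i⌋ - ⌊r * θ i⌋, fun i => ?_⟩
  have hfloor : ⌊(Q : ℝ) * Int.fract (s * θ i)⌋ = ⌊(Q : ℝ) * Int.fract (r * θ i)⌋ := by
    have h := congrArg Fin.val (congrFun hbox_eq i)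
    rw [← Int.natCast_floor_eq_floor (by positivity), ← Int.natCast_floor_eq_floor (by positivity)]
    exact_mod_cast h.symm
  have hclose := Int.abs_sub_lt_one_of_floor_eq_floor hfloor
  rw [← mul_sub, abs_mul, abs_of_pos hQ', mul_comm, ← lt_div_iff₀ hQ'] at hclose
  have hfract : ((s - r : ℕ) * θ i - (⌊s * θ i⌋ - ⌊r * θ i⌋ : ℤ) : ℝ) =
      Int.fract (s * θ i) - Int.fract (r * θ i) := by
    rw [← Int.self_sub_floor, ← Int.self_sub_floor]
    push_cast [Nat.cast_sub hlt'.le]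
    ring
  rwa [hfract]

theorem exists_int_approx_of_ne_zero [Fintype ι] {v : ι → ℤ} (hv : v ≠ 0) {Q : ℕ} (hQ : 0 < Q) :
    ∃ (m : ι) (t : ℕ) (u : ι → ℤ), v m ≠ 0 ∧ u ≠ 0 ∧ (∀ i, v i = 0 → u i = 0) ∧
      (∀ i, |u i| ≤ (Q ^ (Fintype.card ι - 1) : ℕ)) ∧
      ∀ i, |(t * (v i / v m) - u i : ℝ)| < 1 / Q := by
  classical
  obtain ⟨j, hj⟩ := Function.ne_iff.mp hv
  have : Nonempty ι := ⟨j⟩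
  obtain ⟨m, hm⟩ := Finite.exists_max fun i => |v i|
  have hvm : v m ≠ 0 := abs_pos.mp ((abs_pos.mpr hj).trans_le (hm j))
  have hratio (i : ι) : |(v i / v m : ℝ)| ≤ 1 := by
    rw [abs_div]
    exact div_le_one_of_le₀ (by exact_mod_cast hm i) (abs_nonneg _)
  obtain ⟨t, ht, htQ, p, hp⟩ := exists_nat_abs_mul_sub_lt
    (fun i : {i // i ≠ m} => (v i / v m : ℝ)) hQ
  rw [Fintype.card_subtype_compl, Fintype.card_subtype_eq] at htQ
  let u : ι → ℤ := fun i => if h : i = m then t else p ⟨i, h⟩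
  have hum : u m = t := dif_pos rfl
  have hu (i : ι) : |(t * (v i / v m) - u i : ℝ)| < 1 / Q := by
    by_cases h : i = m
    · subst h
      rw [hum, div_self (Int.cast_ne_zero.mpr hvm)]
      simpa using hQ
    · simpa only [u, dif_neg h] using hp ⟨i, h⟩
  have hQ1 : (1 : ℝ) / Q ≤ 1 := div_le_one_of_le₀ (by exact_mod_cast hQ) (Nat.cast_nonneg Q)
  refine ⟨m, t, u, hvm, ?_, fun i hi => ?_, fun i => ?_, hu⟩
  · intro h0
    have := congrFun h0 m
    rw [hum, Pi.zero_apply] at this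
    omega
  · have h : |(u i : ℝ)| < 1 := by simpa [hi] using (hu i).trans_le hQ1
    exact Int.abs_lt_one_iff.mp (by exact_mod_cast h)
  · have h1 : |(t * (v i / v m) : ℝ)| ≤ t := by
      rw [abs_mul, Nat.abs_cast]
      exact mul_le_of_le_one_right (Nat.cast_nonneg t) (hratio i)
    have h2 : |(u i : ℝ)| < t + 1 := by
      have := abs_sub_abs_le_abs_sub (u i : ℝ) (t * (v i / v m))
      rw [abs_sub_comm] at this
      linarith [hu i]
    have h3 : |u i| < t + 1 := by exact_mod_cast h2
    exact (Int.lt_add_one_iff.mp h3).trans (by exact_mod_cast htQ)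

/-- The vectors `z j`, for `j` in the set `J` of pivots, form a reduced echelon family of the
lattice `L`: on `J` the vector `z j` is supported at `j`, and an element of `L` is determined by
its coordinates in `J`. The family is a basis of `L ⊗ ℚ`, but in general not of `L`. The values of
`z` outside `J` are irrelevant. -/
structure IsEchelonFamily (L : AddSubgroup (ι → ℤ)) (J : Finset ι) (z : ι → ι → ℤ) : Prop where
  mem : ∀ j ∈ J, z j ∈ L
  pivot_ne_zero : ∀ j ∈ J, z j j ≠ 0
  apply_eq_zero : ∀ j ∈ J, ∀ i ∈ J, i ≠ j → z j i = 0
  eq_zero : ∀ v ∈ L, (∀ j ∈ J, v j = 0) → v = 0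

variable {L : AddSubgroup (ι → ℤ)} {B : ℕ}

theorem exists_isEchelonFamily [Finite ι]
    (hL : ∀ v ∈ L, v ≠ 0 → ∃ u ∈ L, u ≠ 0 ∧ (∀ i, v i = 0 → u i = 0) ∧ ∀ i, |u i| ≤ B) :
    ∃ J z, IsEchelonFamily L J z ∧ ∀ j ∈ J, ∀ i, |z j i| ≤ B := by
  classical
  have := Fintype.ofFinite ι
  let Determines : Finset ι → Prop := fun J => ∀ v ∈ L, (∀ j ∈ J, v j = 0) → v = 0
  obtain ⟨J, hJ⟩ : ∃ J, Minimal Determines J := exists_minimal_of_wellFoundedLT Determines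
    ⟨Finset.univ, fun v _ h => funext fun i => h i (Finset.mem_univ i)⟩
  have hz (j : ι) (hj : j ∈ J) : ∃ z ∈ L, z j ≠ 0 ∧ (∀ i ∈ J, i ≠ j → z i = 0) ∧
      ∀ i, |z i| ≤ B := by
    have hnot : ¬ Determines (J.erase j) := hJ.not_prop_of_lt (Finset.erase_ssubset hj)
    simp only [Determines, not_forall] at hnot
    obtain ⟨v, hvL, hvJ, hv⟩ := hnot
    obtain ⟨u, huL, hu, husupp, huB⟩ := hL v hvL hv
    have huJ (i : ι) (hi : i ∈ J) (hij : i ≠ j) : u i = 0 :=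
      husupp i (hvJ i (Finset.mem_erase.mpr ⟨hij, hi⟩))
    refine ⟨u, huL, fun huj => hu (hJ.prop u huL fun i hi => ?_), huJ, huB⟩
    exact (eq_or_ne i j).elim (fun h => h ▸ huj) (huJ i hi)
  choose! z hzL hzj hzJ hzB using hz
  exact ⟨J, z, ⟨hzL, hzj, hzJ, hJ.prop⟩, hzB⟩

namespace IsEchelonFamily

variable {J : Finset ι} {z : ι → ι → ℤ} (hz : IsEchelonFamily L J z)
include hz

theorem sum_smul_apply (c : ι → ℤ) {k : ι} (hk : k ∈ J) :
    (∑ j ∈ J, c j • z j) k = c k * z k k := by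
  rw [Finset.sum_apply, Finset.sum_eq_single_of_mem k hk fun j hj hjk => by
    simp [hz.apply_eq_zero j hj k hk hjk.symm]]
  rfl

theorem sum_smul_mem (c : ι → ℤ) : ∑ j ∈ J, c j • z j ∈ L :=
  sum_mem fun j hj => zsmul_mem (hz.mem j hj) _

theorem abs_apply_le (hB : ∀ j ∈ J, ∀ i, |z j i| ≤ B) {y : ι → ℤ} (hy : y ∈ L)
    (hyz : ∀ j ∈ J, |y j| ≤ |z j j|) (i : ι) : |y i| ≤ J.card * B := by
  classical
  let P : ℤ := ∏ j ∈ J, z j j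
  let R : ι → ℤ := fun j => ∏ k ∈ J.erase j, z k k
  have hP : 0 < |P| := abs_pos.mpr (Finset.prod_ne_zero_iff.mpr hz.pivot_ne_zero)
  have hR (j : ι) (hj : j ∈ J) : R j * z j j = P :=
    Finset.prod_erase_mul J (fun k => z k k) hj
  have hexpand : P • y = ∑ j ∈ J, (R j * y j) • z j := by
    refine sub_eq_zero.mp (hz.eq_zero _
      (sub_mem (zsmul_mem hy P) (hz.sum_smul_mem fun j => R j * y j)) fun k hk => ?_)
    rw [Pi.sub_apply, hz.sum_smul_apply _ hk, Pi.smul_apply, smul_eq_mul, ← hR k hk]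
    ring
  have hterm (j : ι) (hj : j ∈ J) : |((R j * y j) • z j) i| ≤ |P| * B := by
    rw [Pi.smul_apply, smul_eq_mul, abs_mul, abs_mul, ← hR j hj, abs_mul]
    exact mul_le_mul (mul_le_mul_of_nonneg_left (hyz j hj) (abs_nonneg _)) (hB j hj i)
      (abs_nonneg _) (by positivity)
  have hsum : |P| * |y i| ≤ |P| * (J.card * B) := by
    calc |P| * |y i| = |∑ j ∈ J, ((R j * y j) • z j) i| := by
          rw [← abs_mul, ← smul_eq_mul, ← Pi.smul_apply, hexpand, Finset.sum_apply]
      _ ≤ ∑ j ∈ J, |((R j * y j) • z j) i| := Finset.abs_sum_le_sum_abs _ _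
      _ ≤ J.card • (|P| * B) := Finset.sum_le_card_nsmul _ _ _ hterm
      _ = |P| * (J.card * B) := by rw [nsmul_eq_mul]; ring
  exact le_of_mul_le_mul_left hsum hP

theorem mem_closure [Fintype ι] (hB : ∀ j ∈ J, ∀ i, |z j i| ≤ B) {w : ι → ℤ} (hw : w ∈ L) :
    w ∈ AddSubgroup.closure {v | v ∈ L ∧ ∀ i, |v i| ≤ (Fintype.card ι * B : ℕ)} := by
  have hmem (v : ι → ℤ) (hv : v ∈ L) (hvB : ∀ i, |v i| ≤ (Fintype.card ι * B : ℕ)) :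
      v ∈ AddSubgroup.closure {v | v ∈ L ∧ ∀ i, |v i| ≤ (Fintype.card ι * B : ℕ)} :=
    AddSubgroup.subset_closure ⟨hv, hvB⟩
  let s : ι → ℤ := ∑ j ∈ J, (w j / z j j) • z j
  have hmod (j : ι) (hj : j ∈ J) : (w - s) j = w j % z j j := by
    rw [Pi.sub_apply, show s j = _ from hz.sum_smul_apply _ hj, Int.emod_def, mul_comm]
  have hremainder (i : ι) : |(w - s) i| ≤ J.card * B := by
    refine hz.abs_apply_le hB (sub_mem hw (hz.sum_smul_mem _)) (fun j hj => ?_) i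
    rw [hmod j hj, abs_of_nonneg (Int.emod_nonneg _ (hz.pivot_ne_zero j hj))]
    exact (Int.emod_lt_abs _ (hz.pivot_ne_zero j hj)).le
  have hcard : J.card * B ≤ Fintype.card ι * B := Nat.mul_le_mul_right B J.card_le_univ
  have hB_le (i : ι) : B ≤ Fintype.card ι * B :=
    Nat.le_mul_of_pos_left B (Fintype.card_pos_iff.mpr ⟨i⟩)
  rw [← sub_add_cancel w s]
  refine add_mem (hmem _ (sub_mem hw (hz.sum_smul_mem _)) fun i => ?_)
    (sum_mem fun j hj => zsmul_mem (hmem _ (hz.mem j hj) fun i => ?_) _)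
  · exact (hremainder i).trans (by exact_mod_cast hcard)
  · exact (hB j hj i).trans (by exact_mod_cast hB_le i)

end IsEchelonFamily

variable [Fintype ι] {A : Type*} [AddCommGroup A]

theorem seminorm_linearCombination_le (q : Seminorm ℤ A) (x : ι → A) (k : ι → ℤ) :
    q (Fintype.linearCombination ℤ x k) ≤ ∑ i, |(k i : ℝ)| * q (x i) := by
  rw [Fintype.linearCombination_apply]
  refine (Finset.le_sum_of_subadditive q (map_zero q).le (map_add_le_add q) _ _).trans_eq ?_
  simp only [map_smul_eq_mul, Int.norm_eq_abs]

variable {q : Seminorm ℤ A} {η : ℝ} {W Q : ℕ} {x : ι → A}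

theorem exists_small_relation (hW : W ≠ 0) (hgap : ∀ a, q a < η → W • a = 0)
    (hQ : ∑ i, q (x i) < η * Q) {v : ι → ℤ} (hv : Fintype.linearCombination ℤ x v = 0)
    (hv0 : v ≠ 0) :
    ∃ u : ι → ℤ, Fintype.linearCombination ℤ x u = 0 ∧ u ≠ 0 ∧ (∀ i, v i = 0 → u i = 0) ∧
      ∀ i, |u i| ≤ (W * Q ^ (Fintype.card ι - 1) : ℕ) := by
  have hH : 0 ≤ ∑ i, q (x i) := Finset.sum_nonneg fun i _ => apply_nonneg q (x i)
  have hQ0 : 0 < Q := Nat.pos_of_ne_zero fun h => by simp [h] at hQ; linarith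
  have hQ' : (0 : ℝ) < Q := Nat.cast_pos.mpr hQ0
  obtain ⟨m, t, u, hvm, hu0, husupp, huQ, hu⟩ := exists_int_approx_of_ne_zero hv0 hQ0
  have hvm' : (v m : ℝ) ≠ 0 := Int.cast_ne_zero.mpr hvm
  have hcoord (i : ι) : |((v m • u - (t : ℤ) • v) i : ℝ)| ≤ |(v m : ℝ)| / Q := by
    calc |((v m • u - (t : ℤ) • v) i : ℝ)| = |(v m : ℝ)| * |(t * (v i / v m) - u i : ℝ)| := by
          rw [← abs_mul, mul_sub, mul_left_comm, mul_div_cancel₀ _ hvm', abs_sub_comm]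
          simp
      _ ≤ |(v m : ℝ)| * (1 / Q) := by gcongr; exact (hu i).le
      _ = |(v m : ℝ)| / Q := mul_one_div _ _
  have hbound : |(v m : ℝ)| * q (Fintype.linearCombination ℤ x u) ≤
      |(v m : ℝ)| * ((∑ i, q (x i)) / Q) := by
    calc |(v m : ℝ)| * q (Fintype.linearCombination ℤ x u)
        = q (Fintype.linearCombination ℤ x (v m • u - (t : ℤ) • v)) := by
          rw [map_sub, map_smul, map_smul, hv, smul_zero, sub_zero, map_smul_eq_mul,
            Int.norm_eq_abs]
      _ ≤ ∑ i, |((v m • u - (t : ℤ) • v) i : ℝ)| * q (x i) := seminorm_linearCombination_le q x _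
      _ ≤ ∑ i, |(v m : ℝ)| / Q * q (x i) := by gcongr with i; exact hcoord i
      _ = |(v m : ℝ)| * ((∑ i, q (x i)) / Q) := by rw [← Finset.mul_sum]; ring
  have hsmall : q (Fintype.linearCombination ℤ x u) < η :=
    (le_of_mul_le_mul_left hbound (abs_pos.mpr hvm')).trans_lt ((div_lt_iff₀ hQ').mpr hQ)
  refine ⟨W • u, by rw [map_nsmul, hgap _ hsmall], smul_ne_zero hW hu0,
    fun i hi => by simp [husupp i hi], fun i => ?_⟩
  rw [Pi.smul_apply, nsmul_eq_mul, abs_mul, Nat.abs_cast, Nat.cast_mul]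
  gcongr
  exact huQ i

theorem mem_closure_small_relations (hW : W ≠ 0) (hgap : ∀ a, q a < η → W • a = 0)
    (hQ : ∑ i, q (x i) < η * Q) {w : ι → ℤ} (hw : Fintype.linearCombination ℤ x w = 0) :
    w ∈ AddSubgroup.closure {v | Fintype.linearCombination ℤ x v = 0 ∧
      ∀ i, |v i| ≤ (Fintype.card ι * (W * Q ^ (Fintype.card ι - 1)) : ℕ)} := by
  obtain ⟨J, z, hz, hzB⟩ := exists_isEchelonFamily
    (L := (LinearMap.ker (Fintype.linearCombination ℤ x)).toAddSubgroup)
    fun v hv hv0 => exists_small_relation hW hgap hQ hv hv0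
  exact hz.mem_closure hzB hw

end Lattice

section TorsionOrder

theorem prod_le_prod_pred_mul_card_add_one (S : Finset ℕ) (hS : ∀ p ∈ S, 2 ≤ p) :
    ∏ p ∈ S, p ≤ (∏ p ∈ S, (p - 1)) * (S.card + 1) := by
  classical
  induction S using Finset.induction_on_max with
  | empty => simp
  | insert a S hmax ih =>
    have ha : a ∉ S := fun h => lt_irrefl a (hmax a h)
    have hsub : S ⊆ Finset.Ico 2 a := fun p hp =>
      Finset.mem_Ico.mpr ⟨hS p (Finset.mem_insert_of_mem hp), hmax p hp⟩
    have hcard : S.card ≤ a - 2 := (Finset.card_le_card hsub).trans_eq (Nat.card_Ico 2 a)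
    have ha2 : 2 ≤ a := hS a (Finset.mem_insert_self a S)
    obtain ⟨b, rfl⟩ : ∃ b, a = b + 1 := ⟨a - 1, by omega⟩
    rw [Finset.prod_insert ha, Finset.prod_insert ha, Finset.card_insert_of_notMem ha,
      Nat.add_sub_cancel]
    calc (b + 1) * ∏ p ∈ S, p
        ≤ (b + 1) * ((∏ p ∈ S, (p - 1)) * (S.card + 1)) := by
          gcongr
          exact ih fun p hp => hS p (Finset.mem_insert_of_mem hp)
      _ = (∏ p ∈ S, (p - 1)) * ((b + 1) * (S.card + 1)) := by ring
      _ ≤ (∏ p ∈ S, (p - 1)) * (b * (S.card + 1 + 1)) := by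
          gcongr _ * ?_
          linarith [show S.card + 1 ≤ b by omega]
      _ = b * (∏ p ∈ S, (p - 1)) * (S.card + 1 + 1) := by ring

theorem le_totient_mul_card_primeFactors_add_one (m : ℕ) :
    m ≤ m.totient * (m.primeFactors.card + 1) := by
  have htwo_le (p : ℕ) (hp : p ∈ m.primeFactors) : 2 ≤ p :=
    (Nat.prime_of_mem_primeFactors hp).two_le
  have hpos : 0 < ∏ p ∈ m.primeFactors, (p - 1) :=
    Finset.prod_pos fun p hp => Nat.sub_pos_of_lt (htwo_le p hp)
  refine Nat.le_of_mul_le_mul_right ?_ hpos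
  calc m * ∏ p ∈ m.primeFactors, (p - 1)
      = m.totient * ∏ p ∈ m.primeFactors, p := (Nat.totient_mul_prod_primeFactors m).symm
    _ ≤ m.totient * ((∏ p ∈ m.primeFactors, (p - 1)) * (m.primeFactors.card + 1)) := by
        gcongr
        exact prod_le_prod_pred_mul_card_add_one _ htwo_le
    _ = m.totient * (m.primeFactors.card + 1) * ∏ p ∈ m.primeFactors, (p - 1) := by ring

theorem card_primeFactors_le_of_totient_le_factorial {m n : ℕ} (h : m.totient ≤ n.factorial) :
    m.primeFactors.card ≤ 2 * n ^ 2 + 2 := by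
  obtain rfl | hm := eq_or_ne m 0
  · simp
  set k := m.primeFactors.card
  have htwo_pow : 2 ^ k ≤ m :=
    (Finset.pow_card_le_prod _ _ _ fun p hp => (Nat.prime_of_mem_primeFactors hp).two_le).trans
      (Nat.le_of_dvd (Nat.pos_of_ne_zero hm) (Nat.prod_primeFactors_dvd m))
  have hfactorial : n.factorial ≤ 2 ^ (n ^ 2) := by
    calc n.factorial ≤ n ^ n := Nat.factorial_le_pow n
      _ ≤ (2 ^ n) ^ n := Nat.pow_le_pow_left Nat.lt_two_pow_self.le n
      _ = 2 ^ (n ^ 2) := by rw [← pow_mul, pow_two]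
  have hsucc : k + 1 ≤ 2 ^ (k / 2 + 1) := by
    have : k / 2 < 2 ^ (k / 2) := Nat.lt_two_pow_self
    rw [pow_succ]
    omega
  have hexp : 2 ^ k ≤ 2 ^ (n ^ 2 + (k / 2 + 1)) := by
    calc 2 ^ k ≤ m := htwo_pow
      _ ≤ m.totient * (k + 1) := le_totient_mul_card_primeFactors_add_one m
      _ ≤ 2 ^ (n ^ 2) * 2 ^ (k / 2 + 1) := Nat.mul_le_mul (h.trans hfactorial) hsucc
      _ = 2 ^ (n ^ 2 + (k / 2 + 1)) := (pow_add _ _ _).symm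
  have := (Nat.pow_le_pow_iff_right one_lt_two).mp hexp
  omega

theorem le_factorial_mul_of_totient_le_factorial {m n : ℕ} (h : m.totient ≤ n.factorial) :
    m ≤ n.factorial * (2 * n ^ 2 + 3) :=
  (le_totient_mul_card_primeFactors_add_one m).trans
    (Nat.mul_le_mul h (Nat.succ_le_succ (card_primeFactors_le_of_totient_le_factorial h)))

open NumberField Units

theorem totient_torsionOrder_le_finrank (K : Type*) [Field K] [NumberField K] :
    (torsionOrder K).totient ≤ Module.finrank ℚ K := by
  obtain ⟨g, hg⟩ := IsCyclic.exists_generator (α := torsion K)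
  have hg_order : orderOf g = torsionOrder K := orderOf_eq_card_of_forall_mem_zpowers hg
  have hg_primitive : IsPrimitiveRoot (g : (𝓞 K)ˣ) (torsionOrder K) :=
    (hg_order ▸ IsPrimitiveRoot.orderOf g).map_of_injective
      (f := (torsion K).subtype) Subtype.val_injective
  have hζ : IsPrimitiveRoot (algebraMap (𝓞 K) K (g : (𝓞 K)ˣ)) (torsionOrder K) :=
    (IsPrimitiveRoot.coe_units_iff.mpr hg_primitive).map_of_injective
      (f := algebraMap (𝓞 K) K) RingOfIntegers.coe_injective
  rw [← Polynomial.natDegree_cyclotomic (torsionOrder K) ℚ,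
    Polynomial.cyclotomic_eq_minpoly_rat hζ (torsionOrder_pos K)]
  exact minpoly.natDegree_le _

theorem pow_torsionOrder_eq_one {K : Type*} [Field K] {x : K} (hx : IsOfFinOrder x) :
    x ^ torsionOrder K = 1 := by
  have : NeZero (orderOf x) := ⟨hx.orderOf_pos.ne'⟩
  exact orderOf_dvd_iff_pow_eq_one.mp
    (dvd_torsionOrder_of_isPrimitiveRoot (IsPrimitiveRoot.orderOf x))

end TorsionOrder

section PrimeSupply

theorem sq_div_six_le_primeCounting_cube {m : ℕ} (hm : 512 ≤ m) :
    (m ^ 2 / 6 : ℝ) ≤ Nat.primeCounting (m ^ 3) := by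
  have hm' : (512 : ℝ) ≤ m := by exact_mod_cast hm
  have hcube : 262144 * (m : ℝ) ≤ (m : ℝ) ^ 3 := by nlinarith [sq_nonneg ((m : ℝ) - 512)]
  have hlog_pos : 0 < Real.log ((m : ℝ) ^ 3) := Real.log_pos (by linarith)
  have hlog : Real.log ((m : ℝ) ^ 3) ≤ 3 * m := by
    rw [Real.log_pow]
    push_cast
    gcongr
    exact Real.log_le_self (Nat.cast_nonneg m)
  have hlog_succ : Real.log ((m : ℝ) ^ 3 + 1) ≤ 1 + 3 * m := by
    calc Real.log ((m : ℝ) ^ 3 + 1) ≤ Real.log (2 * (m : ℝ) ^ 3) :=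
          Real.log_le_log (by positivity) (by linarith)
      _ = Real.log 2 + Real.log ((m : ℝ) ^ 3) := Real.log_mul (by norm_num) (by positivity)
      _ ≤ 1 + 3 * m := by linarith [Real.log_two_lt_d9]
  have hnum : (m : ℝ) ^ 3 / 2 ≤ (m : ℝ) ^ 3 * Real.log 2 - Real.log ((m : ℝ) ^ 3 + 1) := by
    nlinarith [Real.log_two_gt_d9]
  have hchebyshev := Chebyshev.pi_ge (m ^ 3)
  push_cast at hchebyshev
  refine le_trans ((le_div_iff₀ hlog_pos).mpr ?_) hchebyshev
  calc (m ^ 2 / 6 : ℝ) * Real.log ((m : ℝ) ^ 3) ≤ m ^ 2 / 6 * (3 * m) := by gcongr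
    _ = (m : ℝ) ^ 3 / 2 := by ring
    _ ≤ _ := hnum

theorem mul_sq_le_primeCounting {n : ℕ} (hn : 1 ≤ n) :
    32773 * n ^ 2 ≤ Nat.primeCounting ((512 * n) ^ 3) := by
  have h := sq_div_six_le_primeCounting_cube (show 512 ≤ 512 * n by omega)
  have : (32773 * n ^ 2 : ℝ) ≤ Nat.primeCounting ((512 * n) ^ 3) := by
    refine le_trans ?_ h
    push_cast
    nlinarith [sq_nonneg (n : ℝ)]
  exact_mod_cast this

theorem exists_finset_primes_not_dvd {m n : ℕ} (hn : 1 ≤ n) (hm : m ≠ 0)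
    (hcard : m.primeFactors.card ≤ 2 * n ^ 2 + 2) :
    ∃ P : Finset ℕ, (∀ p ∈ P, p.Prime ∧ n ≤ p ∧ p ≤ (512 * n) ^ 3 ∧ ¬ p ∣ m) ∧
      2 * (128 * n) ^ 2 ≤ P.card := by
  classical
  let S : Finset ℕ := (Finset.range ((512 * n) ^ 3 + 1)).filter Nat.Prime
  have hS : S.card = Nat.primeCounting ((512 * n) ^ 3) := by
    rw [Nat.primeCounting, Nat.primeCounting', Nat.count_eq_card_filter_range]
  refine ⟨(S \ m.primeFactors) \ Finset.range n, fun p hp => ?_, ?_⟩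
  · simp only [S, Finset.mem_sdiff, Finset.mem_filter, Finset.mem_range, Nat.mem_primeFactors] at hp
    obtain ⟨⟨⟨hp_lt, hp_prime⟩, hp_factor⟩, hnp⟩ := hp
    exact ⟨hp_prime, not_lt.mp hnp, Nat.lt_succ_iff.mp hp_lt,
      fun h => hp_factor ⟨hp_prime, h, hm⟩⟩
  · have hsdiff_range := Finset.le_card_sdiff (Finset.range n) (S \ m.primeFactors)
    rw [Finset.card_range] at hsdiff_range
    have hsdiff_factors := Finset.le_card_sdiff m.primeFactors S
    have hprimes := mul_sq_le_primeCounting hn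
    have hn_sq : n ≤ n ^ 2 := Nat.le_self_pow two_ne_zero n
    have : 2 * (128 * n) ^ 2 = 32768 * n ^ 2 := by ring
    omega

end PrimeSupply

section Dobrowolski

open Polynomial

/-- The set of complex roots of an integer polynomial, without multiplicity: the conjugates of an
algebraic integer when `f` is its minimal polynomial. -/
def complexRoots (f : ℤ[X]) : Finset ℂ := (f.rootSet ℂ).toFinset

theorem aeval_eq_eval_map_castRingHom (f : ℤ[X]) (a : ℂ) :
    aeval a f = (f.map (Int.castRingHom ℂ)).eval a := by
  rw [eval_map, aeval_def, algebraMap_int_eq]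

theorem map_castRingHom_ne_zero {f : ℤ[X]} (hf : f ≠ 0) : f.map (Int.castRingHom ℂ) ≠ 0 :=
  (Polynomial.map_ne_zero_iff Int.cast_injective).mpr hf

theorem norm_aeval_le {G : ℤ[X]} {N K : ℕ} (hN : G.natDegree < N) (hK : ∀ i, |G.coeff i| ≤ K)
    (a : ℂ) : ‖aeval a G‖ ≤ N * K * max 1 ‖a‖ ^ N := by
  have hterm (i : ℕ) (hi : i ∈ Finset.range N) : ‖G.coeff i • a ^ i‖ ≤ K * max 1 ‖a‖ ^ N := by
    rw [zsmul_eq_mul, norm_mul, norm_pow, Complex.norm_intCast]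
    gcongr
    · exact_mod_cast hK i
    · calc ‖a‖ ^ i ≤ max 1 ‖a‖ ^ i := by gcongr; exact le_max_right _ _
        _ ≤ max 1 ‖a‖ ^ N :=
          pow_le_pow_right₀ (le_max_left _ _) (Finset.mem_range.mp hi).le
  calc ‖aeval a G‖ = ‖∑ i ∈ Finset.range N, G.coeff i • a ^ i‖ := by rw [aeval_eq_sum_range' hN]
    _ ≤ ∑ i ∈ Finset.range N, ‖G.coeff i • a ^ i‖ := norm_sum_le _ _
    _ ≤ (Finset.range N).card • (K * max 1 ‖a‖ ^ N) := Finset.sum_le_card_nsmul _ _ _ hterm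
    _ = N * K * max 1 ‖a‖ ^ N := by rw [Finset.card_range, nsmul_eq_mul, mul_assoc]

theorem abs_coeff_hasseDeriv_le {G : ℤ[X]} {N K T j : ℕ} (hN : G.natDegree < N)
    (hK : ∀ i, |G.coeff i| ≤ K) (hj : j ≤ T) (i : ℕ) :
    |(hasseDeriv j G).coeff i| ≤ (N ^ T * K : ℕ) := by
  rw [hasseDeriv_coeff, abs_mul, Nat.abs_cast, Nat.cast_mul]
  obtain hi | hi := lt_or_ge (i + j) N
  · have hchoose : (i + j).choose j ≤ N ^ T :=
      calc (i + j).choose j ≤ (i + j) ^ j := Nat.choose_le_pow _ _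
        _ ≤ N ^ j := Nat.pow_le_pow_left hi.le j
        _ ≤ N ^ T := Nat.pow_le_pow_right (by omega) hj
    gcongr
    exact hK _
  · rw [coeff_eq_zero_of_natDegree_lt (hN.trans_le hi), abs_zero, mul_zero]
    positivity

theorem norm_aeval_hasseDeriv_le {G : ℤ[X]} {N K T j : ℕ} (hN : G.natDegree < N)
    (hK : ∀ i, |G.coeff i| ≤ K) (hj : j ≤ T) (a : ℂ) :
    ‖aeval a (hasseDeriv j G)‖ ≤ N ^ (T + 1) * K * max 1 ‖a‖ ^ N := by
  have hdeg : (hasseDeriv j G).natDegree < N :=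
    (natDegree_hasseDeriv_le G j).trans_lt ((Nat.sub_le _ _).trans_lt hN)
  refine (norm_aeval_le hdeg (abs_coeff_hasseDeriv_le hN hK hj) a).trans_eq ?_
  push_cast
  ring

theorem exists_ne_forall_norm_sub_lt_two {α κ : Type*} [Fintype α] [Fintype κ] (V : α → κ → ℂ)
    {B : ℕ} (hB : ∀ a k, ‖V a k‖ ≤ B)
    (hcard : ((2 * B + 1) ^ 2) ^ Fintype.card κ < Fintype.card α) :
    ∃ a a', a ≠ a' ∧ ∀ k, ‖V a k - V a' k‖ < 2 := by
  classical
  let I : Finset ℤ := Finset.Icc (-B) B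
  have hI : I.card = 2 * B + 1 := by
    rw [Int.card_Icc]
    omega
  have hfloor {x : ℝ} (hx : |x| ≤ B) : ⌊x⌋ ∈ I := by
    rw [abs_le] at hx
    refine Finset.mem_Icc.mpr ⟨Int.le_floor.mpr (by exact_mod_cast hx.1), ?_⟩
    exact_mod_cast (Int.floor_le x).trans hx.2
  let box : α → κ → I × I := fun a k =>
    (⟨_, hfloor ((Complex.abs_re_le_norm _).trans (hB a k))⟩,
      ⟨_, hfloor ((Complex.abs_im_le_norm _).trans (hB a k))⟩)
  obtain ⟨a, a', hne, hbox⟩ := Fintype.exists_ne_map_eq_of_card_lt box (by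
    rwa [Fintype.card_fun, Fintype.card_prod, Fintype.card_coe, hI, ← pow_two])
  refine ⟨a, a', hne, fun k => ?_⟩
  have hk := Prod.ext_iff.mp (congrFun hbox k)
  have hre := Int.abs_sub_lt_one_of_floor_eq_floor (congrArg Subtype.val hk.1)
  have him := Int.abs_sub_lt_one_of_floor_eq_floor (congrArg Subtype.val hk.2)
  calc ‖V a k - V a' k‖ ≤ |(V a k - V a' k).re| + |(V a k - V a' k).im| :=
        Complex.norm_le_abs_re_add_abs_im _
    _ < 2 := by
        rw [Complex.sub_re, Complex.sub_im]
        linarith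

theorem exists_expand_eq_pow_add_C_mul (f : ℤ[X]) {p : ℕ} (hp : p.Prime) :
    ∃ g : ℤ[X], expand ℤ p f = f ^ p + C (p : ℤ) * g := by
  have : Fact p.Prime := ⟨hp⟩
  have hmod : (expand ℤ p f - f ^ p).map (Int.castRingHom (ZMod p)) = 0 := by
    rw [Polynomial.map_sub, Polynomial.map_pow, map_expand, ZMod.expand_card, sub_self]
  obtain ⟨g, hg⟩ : C (p : ℤ) ∣ expand ℤ p f - f ^ p := by
    refine (C_dvd_iff_dvd_coeff _ _).mpr fun i => ?_
    rw [← ZMod.intCast_zmod_eq_zero_iff_dvd _ p, ← eq_intCast (Int.castRingHom (ZMod p)),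
      ← coeff_map, hmod, coeff_zero]
  exact ⟨g, by rw [← hg, add_sub_cancel]⟩

section Conjugates

variable {f : ℤ[X]} (hf : f.Monic) (hirr : Irreducible f)
include hf

theorem mem_complexRoots {a : ℂ} : a ∈ complexRoots f ↔ aeval a f = 0 := by
  rw [complexRoots, Set.mem_toFinset, mem_rootSet, and_iff_right hf.ne_zero]

include hirr

theorem roots_map_castRingHom_eq_val_complexRoots :
    (f.map (Int.castRingHom ℂ)).roots = (complexRoots f).val := by
  have hsep : (f.map (Int.castRingHom ℂ)).Separable := by
    have hirrQ := (hf.irreducible_iff_irreducible_map_fraction_map (K := ℚ)).mp hirr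
    have := hirrQ.separable.map (f := algebraMap ℚ ℂ)
    rwa [Polynomial.map_map, RingHom.ext_int ((algebraMap ℚ ℂ).comp _) (Int.castRingHom ℂ)] at this
  refine ((nodup_roots hsep).ext (complexRoots f).nodup).mpr fun a => ?_
  rw [mem_roots (map_castRingHom_ne_zero hf.ne_zero), IsRoot, ← aeval_eq_eval_map_castRingHom,
    Finset.mem_val, mem_complexRoots hf]

theorem map_castRingHom_eq_prod_complexRoots :
    f.map (Int.castRingHom ℂ) = ∏ a ∈ complexRoots f, (X - C a) := by
  rw [(IsAlgClosed.splits _).eq_prod_roots_of_monic (hf.map _),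
    roots_map_castRingHom_eq_val_complexRoots hf hirr]
  rfl

theorem card_complexRoots : (complexRoots f).card = f.natDegree := by
  rw [← hf.natDegree_map (Int.castRingHom ℂ), map_castRingHom_eq_prod_complexRoots hf hirr,
    natDegree_finsetProd_X_sub_C_eq_card]

theorem mahlerMeasure_eq_prod_complexRoots :
    (f.map (Int.castRingHom ℂ)).mahlerMeasure = ∏ a ∈ complexRoots f, max 1 ‖a‖ := by
  rw [mahlerMeasure_eq_leadingCoeff_mul_prod_roots, (hf.map _).leadingCoeff, norm_one, one_mul,
    roots_map_castRingHom_eq_val_complexRoots hf hirr]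
  rfl

theorem aeval_eq_zero_iff_dvd {a : ℂ} (ha : a ∈ complexRoots f) (G : ℤ[X]) :
    aeval a G = 0 ↔ f ∣ G := by
  have hfa : aeval a f = 0 := (mem_complexRoots hf).mp ha
  have h_int : IsIntegral ℤ a := ⟨f, hf, hfa⟩
  have hassoc : Associated (minpoly ℤ a) f :=
    (hirr.dvd_iff.mp ((minpoly.isIntegrallyClosed_dvd_iff h_int f).mp hfa)).resolve_left
      (minpoly.not_isUnit ℤ a) |>.symm
  rw [minpoly.isIntegrallyClosed_dvd_iff h_int, hassoc.dvd_iff_dvd_left]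

theorem exists_intCast_eq_prod_aeval (G : ℤ[X]) :
    ∃ z : ℤ, ∏ a ∈ complexRoots f, aeval a G = z := by
  have h := resultant_eq_prod_eval (f.map (Int.castRingHom ℂ)) (G.map (Int.castRingHom ℂ))
    G.natDegree natDegree_map_le (IsAlgClosed.splits _)
  rw [resultant_map_map, (hf.map _).leadingCoeff, one_pow, one_mul, eq_intCast,
    roots_map_castRingHom_eq_val_complexRoots hf hirr] at h
  refine ⟨_, .trans ?_ h.symm⟩
  simp only [aeval_eq_eval_map_castRingHom]
  rfl

theorem dvd_of_prod_norm_aeval_lt_one {G : ℤ[X]}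
    (hG : ∏ a ∈ complexRoots f, ‖aeval a G‖ < 1) : f ∣ G := by
  obtain ⟨z, hz⟩ := exists_intCast_eq_prod_aeval hf hirr G
  rw [← norm_prod, hz, Complex.norm_intCast] at hG
  have hz0 : z = 0 := Int.abs_lt_one_iff.mp (by exact_mod_cast hG)
  rw [hz0, Int.cast_zero] at hz
  obtain ⟨a, ha, hGa⟩ := Finset.prod_eq_zero_iff.mp hz
  exact (aeval_eq_zero_iff_dvd hf hirr ha G).mp hGa

theorem pow_dvd_of_forall_dvd_hasseDeriv {F : ℤ[X]} (hF : F ≠ 0) {T : ℕ}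
    (h : ∀ j < T, f ∣ hasseDeriv j F) : f ^ T ∣ F := by
  rw [← map_dvd_map (Int.castRingHom ℂ) Int.cast_injective (hf.pow T), Polynomial.map_pow,
    map_castRingHom_eq_prod_complexRoots hf hirr, ← Finset.prod_pow]
  have hF' := map_castRingHom_ne_zero hF
  refine Finset.prod_dvd_of_coprime
    (fun a _ b _ hab => (isCoprime_X_sub_C_of_isUnit_sub (sub_ne_zero.mpr hab).isUnit).pow)
    fun a ha => ?_
  obtain _ | T := T
  · simp
  rw [← le_rootMultiplicity_iff hF', Nat.succ_le_iff,
    lt_rootMultiplicity_iff_isRoot_iterate_derivative hF']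
  intro j hj
  have haj : aeval a (hasseDeriv j F) = 0 :=
    (aeval_eq_zero_iff_dvd hf hirr ha _).mpr (h j (Nat.lt_succ_iff.mpr hj))
  rw [iterate_derivative_map, ← factorial_smul_hasseDeriv, IsRoot, ← aeval_eq_eval_map_castRingHom,
    LinearMap.smul_apply, map_nsmul, haj, smul_zero]

theorem pow_dvd_of_norm_aeval_hasseDeriv_lt {F : ℤ[X]} (hF : F ≠ 0) {N T : ℕ}
    (hM : (f.map (Int.castRingHom ℂ)).mahlerMeasure ^ N < 3 ^ f.natDegree)
    (h : ∀ j < T, ∀ a ∈ complexRoots f, ‖aeval a (hasseDeriv j F)‖ ≤ max 1 ‖a‖ ^ N / 3) :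
    f ^ T ∣ F := by
  refine pow_dvd_of_forall_dvd_hasseDeriv hf hirr hF fun j hj =>
    dvd_of_prod_norm_aeval_lt_one hf hirr ?_
  calc ∏ a ∈ complexRoots f, ‖aeval a (hasseDeriv j F)‖
      ≤ ∏ a ∈ complexRoots f, (max 1 ‖a‖ ^ N / 3) := by
        gcongr with a ha
        exact h j hj a ha
    _ = (f.map (Int.castRingHom ℂ)).mahlerMeasure ^ N / 3 ^ f.natDegree := by
        rw [Finset.prod_div_distrib, Finset.prod_pow, Finset.prod_const,
          card_complexRoots hf hirr, mahlerMeasure_eq_prod_complexRoots hf hirr]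
    _ < 1 := (div_lt_one (by positivity)).mpr hM

theorem exists_pow_dvd_of_card_lt {N T H : ℕ} (hN : 0 < N)
    (hM : (f.map (Int.castRingHom ℂ)).mahlerMeasure ^ N < 3 ^ f.natDegree)
    (hcard : ((2 * (6 * N ^ (T + 1) * H) + 1) ^ 2) ^ (f.natDegree * T) < (H + 1) ^ N) :
    ∃ F : ℤ[X], F ≠ 0 ∧ F.natDegree < N ∧ (∀ i, |F.coeff i| ≤ H) ∧ f ^ T ∣ F := by
  let P : (Fin N → Fin (H + 1)) → ℤ[X] := fun c => ofFn N fun i => (c i : ℕ)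
  have hP_deg (c) : (P c).natDegree < N := ofFn_natDegree_lt hN _
  have hP_coeff (c) (i : ℕ) : 0 ≤ (P c).coeff i ∧ (P c).coeff i ≤ H := by
    obtain hi | hi := lt_or_ge i N
    · rw [ofFn_coeff_eq_val_of_lt _ hi]
      exact ⟨Int.natCast_nonneg _, by exact_mod_cast Nat.lt_succ_iff.mp (c ⟨i, hi⟩).2⟩
    · simp [P, ofFn_coeff_eq_zero_of_ge _ hi]
  have hP_inj : Function.Injective P := fun c c' h => by
    funext i
    have hi := congrArg (coeff · (i : ℕ)) h
    simp only [P, ofFn_coeff_eq_val_of_lt _ i.2] at hi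
    exact Fin.ext (by exact_mod_cast hi)
  let w : ℂ → ℝ := fun a => max 1 ‖a‖ ^ N / 6
  have hw (a : ℂ) : 0 < w a := by positivity
  have hw_norm (z a : ℂ) : ‖z / w a‖ = ‖z‖ / w a := by
    rw [norm_div, Complex.norm_real, Real.norm_of_nonneg (hw a).le]
  let V : (Fin N → Fin (H + 1)) → complexRoots f × Fin T → ℂ := fun c x =>
    aeval x.1.1 (hasseDeriv x.2 (P c)) / w x.1.1
  have hV (c) (x) : ‖V c x‖ ≤ (6 * N ^ (T + 1) * H : ℕ) := by
    rw [hw_norm, div_le_iff₀ (hw _)]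
    refine (norm_aeval_hasseDeriv_le (K := H) (hP_deg c) (fun i => ?_) x.2.2.le _).trans_eq ?_
    · exact (abs_of_nonneg (hP_coeff c i).1).trans_le (hP_coeff c i).2
    · simp only [w]
      push_cast
      ring
  obtain ⟨c, c', hne, hclose⟩ := exists_ne_forall_norm_sub_lt_two V hV
    (by simpa [card_complexRoots hf hirr] using hcard)
  have hF : P c - P c' ≠ 0 := sub_ne_zero.mpr (hP_inj.ne hne)
  refine ⟨P c - P c', hF, (natDegree_sub_le _ _).trans_lt (max_lt (hP_deg c) (hP_deg c')),
    fun i => abs_sub_le_of_nonneg_of_le (hP_coeff c i).1 (hP_coeff c i).2 (hP_coeff c' i).1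
      (hP_coeff c' i).2,
    pow_dvd_of_norm_aeval_hasseDeriv_lt hf hirr hF hM fun j hj a ha => ?_⟩
  have hja := hclose (⟨a, ha⟩, ⟨j, hj⟩)
  rw [← sub_div, ← map_sub, ← map_sub, hw_norm, div_lt_iff₀ (hw a)] at hja
  linarith [show w a = max 1 ‖a‖ ^ N / 6 from rfl]

theorem dvd_expand_of_pow_dvd {F : ℤ[X]} {N K T p : ℕ} (hN : F.natDegree < N)
    (hK : ∀ i, |F.coeff i| ≤ K) (hF : f ^ T ∣ F) (hp : p.Prime)
    (hsize : ((N : ℝ) * K) ^ f.natDegree *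
      ((f.map (Int.castRingHom ℂ)).mahlerMeasure ^ N) ^ p < ((p : ℝ) ^ T) ^ f.natDegree) :
    f ∣ expand ℤ p F := by
  obtain ⟨Q, rfl⟩ := hF
  obtain ⟨g, hg⟩ := exists_expand_eq_pow_add_C_mul f hp
  let G : ℤ[X] := g ^ T * expand ℤ p Q
  have hG {a : ℂ} (ha : a ∈ complexRoots f) :
      aeval a (expand ℤ p (f ^ T * Q)) = (p : ℂ) ^ T * aeval a G := by
    have hfa : aeval a f = 0 := (mem_complexRoots hf).mp ha
    simp only [G, map_mul, map_pow, hg, map_add, hfa, zero_pow hp.ne_zero, zero_add, map_natCast]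
    ring
  have hmax (a : ℂ) : max 1 ‖a ^ p‖ = max 1 ‖a‖ ^ p := by
    rw [norm_pow]
    obtain h | h := le_total 1 ‖a‖
    · rw [max_eq_right h, max_eq_right (one_le_pow₀ h)]
    · rw [max_eq_left h, max_eq_left (pow_le_one₀ (norm_nonneg a) h), one_pow]
  have hprod : ((p : ℝ) ^ T) ^ f.natDegree * ∏ a ∈ complexRoots f, ‖aeval a G‖ <
      ((p : ℝ) ^ T) ^ f.natDegree * 1 := by
    calc ((p : ℝ) ^ T) ^ f.natDegree * ∏ a ∈ complexRoots f, ‖aeval a G‖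
        = ∏ a ∈ complexRoots f, ‖aeval (a ^ p) (f ^ T * Q)‖ := by
          rw [← card_complexRoots hf hirr, ← Finset.prod_const, ← Finset.prod_mul_distrib]
          refine Finset.prod_congr rfl fun a ha => ?_
          rw [← expand_aeval, hG ha, norm_mul, norm_pow, Complex.norm_natCast]
      _ ≤ ∏ a ∈ complexRoots f, (N * K * (max 1 ‖a‖ ^ N) ^ p) := by
          gcongr with a
          refine (norm_aeval_le hN hK (a ^ p)).trans_eq ?_
          rw [hmax, pow_right_comm]
      _ = ((N : ℝ) * K) ^ f.natDegree *
            ((f.map (Int.castRingHom ℂ)).mahlerMeasure ^ N) ^ p := by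
          rw [Finset.prod_mul_distrib, Finset.prod_const, card_complexRoots hf hirr,
            mahlerMeasure_eq_prod_complexRoots hf hirr, Finset.prod_pow, Finset.prod_pow]
      _ < ((p : ℝ) ^ T) ^ f.natDegree * 1 := by rwa [mul_one]
  have hfG : f ∣ G :=
    dvd_of_prod_norm_aeval_lt_one hf hirr (lt_of_mul_lt_mul_left hprod (by positivity))
  obtain ⟨a, ha⟩ : (complexRoots f).Nonempty := by
    rw [← Finset.card_pos, card_complexRoots hf hirr]
    exact hf.natDegree_pos_of_not_isUnit hirr.not_isUnit
  rw [← aeval_eq_zero_iff_dvd hf hirr ha, hG ha, (aeval_eq_zero_iff_dvd hf hirr ha G).mpr hfG,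
    mul_zero]

theorem natDegree_mul_card_le_of_dvd_expand {F : ℤ[X]} (hF : F ≠ 0) {P : Finset ℕ}
    (hinj : Set.InjOn (fun x : ℂ × ℕ => x.1 ^ x.2) (complexRoots f ×ˢ P : Finset (ℂ × ℕ)))
    (hdvd : ∀ p ∈ P, f ∣ expand ℤ p F) : f.natDegree * P.card ≤ F.natDegree := by
  classical
  let Z : Finset ℂ := (complexRoots f ×ˢ P).image fun x => x.1 ^ x.2
  have hZ : Z.val ⊆ (F.map (Int.castRingHom ℂ)).roots := fun z hz => by
    obtain ⟨⟨a, p⟩, hap, rfl⟩ := Finset.mem_image.mp (Finset.mem_val.mp hz)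
    obtain ⟨ha, hp⟩ := Finset.mem_product.mp hap
    rw [mem_roots (map_castRingHom_ne_zero hF), IsRoot, ← aeval_eq_eval_map_castRingHom,
      ← expand_aeval]
    exact (aeval_eq_zero_iff_dvd hf hirr ha _).mpr (hdvd p hp)
  calc f.natDegree * P.card = Z.card := by
        rw [Finset.card_image_of_injOn hinj, Finset.card_product, card_complexRoots hf hirr]
    _ ≤ (F.map (Int.castRingHom ℂ)).natDegree := card_le_degree_of_subset_roots hZ
    _ ≤ F.natDegree := natDegree_map_le

theorem exists_pow_dvd_of_mahlerMeasure_pow_lt {N T : ℕ} (hT : 4 ≤ T)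
    (hN : N = 2 * f.natDegree * T ^ 2)
    (hM : (f.map (Int.castRingHom ℂ)).mahlerMeasure ^ N < 3 ^ f.natDegree) :
    ∃ F : ℤ[X], F ≠ 0 ∧ F.natDegree < N ∧ (∀ i, |F.coeff i| ≤ (N ^ 2 : ℕ)) ∧ f ^ T ∣ F := by
  have hd : 0 < f.natDegree := hf.natDegree_pos_of_not_isUnit hirr.not_isUnit
  have hN32 : 32 ≤ N := by
    calc 32 ≤ 2 * 1 * 4 ^ 2 := by norm_num
      _ ≤ N := by rw [hN]; gcongr; exact hd
  refine exists_pow_dvd_of_card_lt hf hirr (by omega) hM ?_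
  have hbase : 2 * (6 * N ^ (T + 1) * N ^ 2) + 1 ≤ N ^ (T + 4) := by
    have : 1 ≤ N ^ (T + 1) * N ^ 2 := Nat.one_le_iff_ne_zero.mpr (by positivity)
    rw [show N ^ (T + 4) = N * (N ^ (T + 1) * N ^ 2) by ring]
    nlinarith
  calc ((2 * (6 * N ^ (T + 1) * N ^ 2) + 1) ^ 2) ^ (f.natDegree * T)
      ≤ ((N ^ (T + 4)) ^ 2) ^ (f.natDegree * T) := by gcongr
    _ = N ^ (2 * ((T + 4) * (f.natDegree * T))) := by rw [← pow_mul, ← pow_mul]; ring_nf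
    _ ≤ N ^ (2 * N) := by
        gcongr
        · omega
        · calc (T + 4) * (f.natDegree * T) ≤ (2 * T) * (f.natDegree * T) := by gcongr; omega
            _ = N := by rw [hN]; ring
    _ = (N ^ 2) ^ N := pow_mul _ _ _
    _ < (N ^ 2 + 1) ^ N := Nat.pow_lt_pow_left (by omega) (by omega)

theorem log_three_le_or_exists_mul_log_prime_le {T : ℕ} (hT : 4 ≤ T) {P : Finset ℕ}
    (hP : ∀ p ∈ P, p.Prime) (hcard : 2 * T ^ 2 ≤ P.card)
    (hinj : Set.InjOn (fun x : ℂ × ℕ => x.1 ^ x.2) (complexRoots f ×ˢ P : Finset (ℂ × ℕ))) :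
    Real.log 3 ≤ 2 * T ^ 2 * Real.log (f.map (Int.castRingHom ℂ)).mahlerMeasure ∨
      ∃ p ∈ P, T * Real.log p ≤ 3 * Real.log (2 * f.natDegree * T ^ 2) +
        2 * T ^ 2 * p * Real.log (f.map (Int.castRingHom ℂ)).mahlerMeasure := by
  set M := (f.map (Int.castRingHom ℂ)).mahlerMeasure with hM_def
  have hM : 0 < M := mahlerMeasure_pos_of_ne_zero (map_castRingHom_ne_zero hf.ne_zero)
  set d := f.natDegree with hd_def
  have hd : 0 < d := hf.natDegree_pos_of_not_isUnit hirr.not_isUnit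
  obtain ⟨N, hN⟩ : ∃ N, N = 2 * d * T ^ 2 := ⟨_, rfl⟩
  have hN' : (N : ℝ) = d * (2 * T ^ 2) := by rw [hN]; push_cast; ring
  have hN0 : 0 < N := by rw [hN]; positivity
  by_contra! hcon
  obtain ⟨hlog_three, hlog_prime⟩ := hcon
  have hM_pow : M ^ N < 3 ^ d := by
    rw [← Real.log_lt_log_iff (by positivity) (by positivity), Real.log_pow, Real.log_pow, hN',
      mul_assoc]
    gcongr
  obtain ⟨F, hF0, hFN, hF_coeff, hF_dvd⟩ :=
    exists_pow_dvd_of_mahlerMeasure_pow_lt hf hirr hT hN hM_pow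
  have hdvd (p : ℕ) (hp : p ∈ P) : f ∣ expand ℤ p F := by
    refine dvd_expand_of_pow_dvd hf hirr hFN hF_coeff hF_dvd (hP p hp) ?_
    have hp0 : (0 : ℝ) < p := Nat.cast_pos.mpr (hP p hp).pos
    rw [← hd_def, ← hM_def, ← Real.log_lt_log_iff (by positivity) (by positivity)]
    calc Real.log ((N * (N ^ 2 : ℕ)) ^ d * (M ^ N) ^ p)
        = d * (3 * Real.log N + 2 * T ^ 2 * p * Real.log M) := by
          rw [Real.log_mul (by positivity) (by positivity), ← pow_mul, Real.log_pow, Real.log_pow,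
            Nat.cast_pow, ← pow_succ', Real.log_pow, Nat.cast_mul, hN']
          push_cast
          ring
      _ < d * (T * Real.log p) := by
          have := hlog_prime p hp
          rw [show (2 * d * T ^ 2 : ℝ) = N by rw [hN']; ring] at this
          gcongr
      _ = Real.log ((p ^ T) ^ d) := by rw [Real.log_pow, Real.log_pow]
  refine hFN.not_ge ?_
  calc N = d * (2 * T ^ 2) := by rw [hN]; ring
    _ ≤ d * P.card := by gcongr
    _ ≤ F.natDegree := natDegree_mul_card_le_of_dvd_expand hf hirr hF0 hinj hdvd

end Conjugates

theorem log_two_mul_mul_sq_le {n d p : ℕ} (hn : 1 ≤ n) (hd : 1 ≤ d) (hdn : d ≤ n.factorial)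
    (hp : 2 ≤ p) (hnp : n ≤ p) : Real.log (2 * d * (128 * n) ^ 2) ≤ (n + 17) * Real.log p := by
  have hlog_two : Real.log 2 ≤ Real.log p := Real.log_le_log two_pos (by exact_mod_cast hp)
  have hlog_n : Real.log n ≤ Real.log p := Real.log_le_log (by positivity) (by exact_mod_cast hnp)
  have hlog_d : Real.log d ≤ n * Real.log p := by
    rw [← Real.log_pow]
    refine Real.log_le_log (by positivity) ?_
    exact_mod_cast hdn.trans ((Nat.factorial_le_pow n).trans (Nat.pow_le_pow_left hnp n))
  calc Real.log (2 * d * (128 * n) ^ 2) = Real.log (d * (2 ^ 15 * n ^ 2)) := by ring_nf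
    _ = Real.log d + (15 * Real.log 2 + 2 * Real.log n) := by
      rw [Real.log_mul (by positivity) (by positivity),
        Real.log_mul (by positivity) (by positivity), Real.log_pow, Real.log_pow]
      push_cast
      rfl
    _ ≤ (n + 17) * Real.log p := by linarith

theorem one_div_le_log_mahlerMeasure {f : ℤ[X]} (hf : f.Monic) (hirr : Irreducible f) {n : ℕ}
    (hn : 1 ≤ n) (hd : f.natDegree ≤ n.factorial) {P : Finset ℕ}
    (hP : ∀ p ∈ P, p.Prime ∧ n ≤ p ∧ p ≤ (512 * n) ^ 3) (hcard : 2 * (128 * n) ^ 2 ≤ P.card)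
    (hinj : Set.InjOn (fun x : ℂ × ℕ => x.1 ^ x.2) (complexRoots f ×ˢ P : Finset (ℂ × ℕ))) :
    1 / (2 ^ 37 * n ^ 4) ≤ Real.log (f.map (Int.castRingHom ℂ)).mahlerMeasure := by
  set L := Real.log (f.map (Int.castRingHom ℂ)).mahlerMeasure
  have hL : 0 ≤ L := Real.log_nonneg (one_le_mahlerMeasure_of_ne_zero hf.ne_zero)
  have hn' : (1 : ℝ) ≤ n := by exact_mod_cast hn
  rw [div_le_iff₀' (by positivity)]
  obtain hlog_three | ⟨p, hp, hlog_p⟩ := log_three_le_or_exists_mul_log_prime_le hf hirr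
    (T := 128 * n) (by omega) (fun p hp => (hP p hp).1) hcard hinj
  · have hone : 1 ≤ Real.log 3 := by
      rw [Real.le_log_iff_exp_le (by norm_num)]
      exact (Real.exp_one_lt_d9.trans (by norm_num)).le
    calc 1 ≤ 2 * ((128 * n : ℕ) : ℝ) ^ 2 * L := hone.trans hlog_three
      _ = 2 ^ 15 * n ^ 2 * L := by push_cast; ring
      _ ≤ 2 ^ 37 * n ^ 4 * L := by gcongr <;> norm_num
  · obtain ⟨hprime, hnp, hpn⟩ := hP p hp
    have hpn' : (p : ℝ) ≤ (512 * n) ^ 3 := by exact_mod_cast hpn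
    have hlog_mul := log_two_mul_mul_sq_le hn
      (hf.natDegree_pos_of_not_isUnit hirr.not_isUnit) hd hprime.two_le hnp
    have hlog_two : 0.69 ≤ Real.log 2 := by linarith [Real.log_two_gt_d9]
    have hlog_p_ge : 0.69 ≤ Real.log p := hlog_two.trans
      (Real.log_le_log two_pos (by exact_mod_cast hprime.two_le))
    have hlarge : 2 * (128 * n) ^ 2 * p * L ≤ 32 * n * (2 ^ 37 * n ^ 4 * L) := by
      calc 2 * (128 * n) ^ 2 * p * L ≤ 2 * (128 * n) ^ 2 * (512 * n) ^ 3 * L := by gcongr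
        _ = 32 * n * (2 ^ 37 * n ^ 4 * L) := by ring
    push_cast at hlog_p
    have hmain : 32 * n * 1 ≤ 32 * n * (2 ^ 37 * n ^ 4 * L) := by
      calc (32 * n * 1 : ℝ) ≤ 74 * n * 0.69 := by linarith
        _ ≤ 74 * n * Real.log p := by gcongr
        _ ≤ (128 * n - 3 * (n + 17)) * Real.log p := by gcongr; linarith
        _ ≤ 32 * n * (2 ^ 37 * n ^ 4 * L) := by linarith
    exact le_of_mul_le_mul_left hmain (by positivity)

end Dobrowolski

section Heights

open Height NumberField Real

section Archimedean

variable {K : Type*} [Field K] [NumberField K]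

theorem sum_mult_mul_posLog_eq_sum_embeddings (x : K) :
    ∑ v : InfinitePlace K, v.mult * log⁺ (v x) = ∑ σ : K →+* ℂ, log⁺ ‖σ x‖ := by
  classical
  rw [← Finset.sum_fiberwise (s := (Finset.univ : Finset (K →+* ℂ))) (g := InfinitePlace.mk)]
  refine Finset.sum_congr rfl fun v _ => ?_
  rw [← InfinitePlace.card_filter_mk_eq, ← nsmul_eq_mul, ← Finset.sum_const]
  refine Finset.sum_congr rfl fun σ hσ => ?_
  rw [← (Finset.mem_filter.mp hσ).2, InfinitePlace.apply]

theorem sum_embeddings_posLog_le_logHeight₁ (x : K) :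
    ∑ σ : K →+* ℂ, log⁺ ‖σ x‖ ≤ logHeight₁ x := by
  rw [← sum_mult_mul_posLog_eq_sum_embeddings, NumberField.logHeight₁_eq]
  exact le_add_of_nonneg_right (finsum_nonneg fun v => posLog_nonneg)

theorem logHeight₁_eq_sum_embeddings_of_isIntegral {x : K} (hx : IsIntegral ℤ x) :
    logHeight₁ x = ∑ σ : K →+* ℂ, log⁺ ‖σ x‖ := by
  have hfinite (v : FinitePlace K) : log⁺ (v x) = 0 := by
    rw [posLog_eq_zero_iff, abs_of_nonneg (apply_nonneg v x),
      ← FinitePlace.norm_embedding_eq v x]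
    exact FinitePlace.norm_le_one K v.maximalIdeal (⟨x, hx⟩ : 𝓞 K)
  rw [← sum_mult_mul_posLog_eq_sum_embeddings, NumberField.logHeight₁_eq,
    finsum_eq_zero_of_forall_eq_zero hfinite, add_zero]

theorem log_two_le_logHeight₁_of_not_isIntegral {x : K} (hx : ¬ IsIntegral ℤ x) :
    log 2 ≤ logHeight₁ x := by
  obtain ⟨n, hn, hle, h_int⟩ := exists_nat_le_mulHeight₁ x
  have hn_one : n ≠ 1 := by
    rintro rfl
    exact hx (by simpa using h_int)
  have hn_two : (2 : ℝ) ≤ n := by exact_mod_cast (by omega : 2 ≤ n)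
  exact log_le_log two_pos (hn_two.trans hle)

theorem logHeight₁_le_finrank_mul_log {x : K} (hx : IsIntegral ℤ x) {B : ℝ} (hB : 1 ≤ B)
    (h : ∀ σ : K →+* ℂ, ‖σ x‖ ≤ B) : logHeight₁ x ≤ Module.finrank ℚ K * log B := by
  rw [logHeight₁_eq_sum_embeddings_of_isIntegral hx, ← Embeddings.card K ℂ, ← nsmul_eq_mul]
  refine Finset.sum_le_card_nsmul _ _ _ fun σ _ => ?_
  calc log⁺ ‖σ x‖ ≤ log⁺ B := posLog_le_posLog (norm_nonneg _) (h σ)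
    _ = log B := posLog_eq_log (hB.trans (le_abs_self B))

theorem logHeight₁_le_of_isIntegral_natCast_mul {x : K} {δ : ℕ} (hδ : δ ≠ 0)
    (hx : IsIntegral ℤ (δ * x)) {B : ℝ} (hδB : δ ≤ B) (h : ∀ σ : K →+* ℂ, ‖σ (δ * x)‖ ≤ B) :
    logHeight₁ x ≤ Module.finrank ℚ K * (2 * log B) := by
  have hB : 1 ≤ B := le_trans (by exact_mod_cast Nat.one_le_iff_ne_zero.mpr hδ) hδB
  have hδ_height : logHeight₁ (δ : K) ≤ Module.finrank ℚ K * log B :=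
    logHeight₁_le_finrank_mul_log (isIntegral_natCast δ) hB
      (by simpa using hδB)
  calc logHeight₁ x = logHeight₁ ((δ : K)⁻¹ * (δ * x)) := by
        rw [inv_mul_cancel_left₀ (Nat.cast_ne_zero.mpr hδ)]
    _ ≤ logHeight₁ (δ : K) + logHeight₁ (δ * x) :=
        (logHeight₁_mul_le _ _).trans_eq (by rw [logHeight₁_inv])
    _ ≤ Module.finrank ℚ K * (2 * log B) := by
        linarith [logHeight₁_le_finrank_mul_log hx hB h]

theorem complexRoots_minpoly [DecidableEq ℂ] {x : K} (hx : IsIntegral ℤ x) :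
    complexRoots (minpoly ℤ x) = Finset.univ.image fun σ : K →+* ℂ => σ x := by
  ext a
  have ha := Set.ext_iff.mp (Embeddings.range_eval_eq_rootSet_minpoly K ℂ x) a
  rw [Polynomial.mem_rootSet_of_ne (minpoly.ne_zero (IsIntegral.of_finite ℚ x)),
    minpoly.isIntegrallyClosed_eq_field_fractions' ℚ hx, Polynomial.aeval_map_algebraMap] at ha
  rw [mem_complexRoots (minpoly.monic hx), ← ha]
  simp

theorem log_mahlerMeasure_minpoly_le {x : K} (hx : IsIntegral ℤ x) :
    log ((minpoly ℤ x).map (Int.castRingHom ℂ)).mahlerMeasure ≤ logHeight₁ x := by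
  classical
  rw [mahlerMeasure_eq_prod_complexRoots (minpoly.monic hx) (minpoly.irreducible hx),
    log_prod fun a _ => by positivity, complexRoots_minpoly hx]
  simp_rw [← posLog_eq_log_max_one (norm_nonneg _)]
  exact (Finset.sum_image_le_of_nonneg fun _ _ => posLog_nonneg).trans
    (sum_embeddings_posLog_le_logHeight₁ x)

theorem natDegree_minpoly_int_le_finrank {x : K} (hx : IsIntegral ℤ x) :
    (minpoly ℤ x).natDegree ≤ Module.finrank ℚ K := by
  rw [← (minpoly.monic hx).natDegree_map (algebraMap ℤ ℚ),
    ← minpoly.isIntegrallyClosed_eq_field_fractions' ℚ hx]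
  exact minpoly.natDegree_le x

end Archimedean

theorem eq_of_pow_eq_smul_pow {G Γ : Type*} [CommGroup G] [Group Γ] [Finite Γ]
    [MulDistribMulAction Γ G] {x : G} (hx : ¬ IsOfFinOrder x) {g : Γ} {p r : ℕ}
    (h : x ^ p = (g • x) ^ r) : p = r := by
  have hiter (k : ℕ) : x ^ p ^ k = (g ^ k • x) ^ r ^ k := by
    induction k with
    | zero => simp
    | succ k ih =>
      calc x ^ p ^ (k + 1) = (g ^ k • x ^ p) ^ r ^ k := by
            rw [pow_succ, pow_mul, ih, pow_right_comm, smul_pow']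
        _ = (g ^ (k + 1) • x) ^ r ^ (k + 1) := by
            rw [h, smul_pow', smul_smul, ← pow_succ, ← pow_mul, ← pow_succ']
  have hpow : p ^ orderOf g = r ^ orderOf g :=
    injective_pow_iff_not_isOfFinOrder.mpr hx <| by
      simpa only [pow_orderOf_eq_one, one_smul] using hiter (orderOf g)
  exact Nat.pow_left_injective (orderOf_pos g).ne' hpow

theorem pow_left_injective_of_not_dvd_torsionOrder {K : Type*} [Field K] [NumberField K] {p : ℕ}
    (hp : p.Prime) (h : ¬ p ∣ Units.torsionOrder K) : Function.Injective fun x : Kˣ => x ^ p := by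
  refine fun x y hxy => by_contra fun hne => h ?_
  have : Fact p.Prime := ⟨hp⟩
  have : NeZero p := ⟨hp.ne_zero⟩
  have horder : orderOf (x / y) = p :=
    orderOf_eq_prime (by rw [div_pow, div_eq_one]; exact hxy) (by rwa [Ne, div_eq_one])
  refine Units.dvd_torsionOrder_of_isPrimitiveRoot (ζ := ((x / y : Kˣ) : K)) ?_
  rwa [IsPrimitiveRoot.iff_orderOf, orderOf_units]

section Galois

variable {K : Type*} [Field K] [NumberField K] [IsGalois ℚ K] {n : ℕ}

theorem injOn_pow_complexRoots_minpoly {x : Kˣ} (hx : ¬ IsOfFinOrder x)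
    (h_int : IsIntegral ℤ (x : K)) {P : Finset ℕ}
    (hP : ∀ p ∈ P, p.Prime ∧ ¬ p ∣ Units.torsionOrder K) :
    Set.InjOn (fun z : ℂ × ℕ => z.1 ^ z.2)
      (complexRoots (minpoly ℤ (x : K)) ×ˢ P : Finset (ℂ × ℕ)) := by
  classical
  rintro ⟨a, p⟩ hap ⟨b, r⟩ hbr h
  simp only [Finset.coe_product, Set.mem_prod, Finset.mem_coe, complexRoots_minpoly h_int,
    Finset.mem_image, Finset.mem_univ, true_and] at hap hbr
  obtain ⟨⟨σ, rfl⟩, hp⟩ := hap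
  obtain ⟨⟨τ, rfl⟩, -⟩ := hbr
  obtain ⟨g, rfl⟩ := ComplexEmbedding.exists_comp_symm_eq_of_comp_eq (k := ℚ) σ τ
    (Subsingleton.elim _ _)
  have hpow : x ^ p = (g.symm • x) ^ r := Units.ext (σ.injective (by simpa using h))
  obtain rfl := eq_of_pow_eq_smul_pow hx hpow
  have hfix := pow_left_injective_of_not_dvd_torsionOrder (hP p hp).1 (hP p hp).2 hpow
  refine Prod.ext (congrArg σ ?_) rfl
  exact congrArg Units.val hfix

theorem one_div_le_logHeight₁_of_isIntegral (hn : 1 ≤ n)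
    (hK : Module.finrank ℚ K ≤ n.factorial) {x : Kˣ} (hx : ¬ IsOfFinOrder x)
    (h_int : IsIntegral ℤ (x : K)) : 1 / (2 ^ 37 * n ^ 4) ≤ logHeight₁ (x : K) := by
  obtain ⟨P, hP, hcard⟩ := exists_finset_primes_not_dvd hn (Units.torsionOrder_ne_zero K)
    (card_primeFactors_le_of_totient_le_factorial ((totient_torsionOrder_le_finrank K).trans hK))
  refine (one_div_le_log_mahlerMeasure (minpoly.monic h_int) (minpoly.irreducible h_int) hn
    ((natDegree_minpoly_int_le_finrank h_int).trans hK) (fun p hp => ?_) hcard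
    (injOn_pow_complexRoots_minpoly hx h_int fun p hp => ?_)).trans
      (log_mahlerMeasure_minpoly_le h_int)
  · exact ⟨(hP p hp).1, (hP p hp).2.1, (hP p hp).2.2.1⟩
  · exact ⟨(hP p hp).1, (hP p hp).2.2.2⟩

theorem isOfFinOrder_of_logHeight₁_lt (hn : 1 ≤ n) (hK : Module.finrank ℚ K ≤ n.factorial)
    {x : Kˣ} (hx : logHeight₁ (x : K) < 1 / (2 ^ 37 * n ^ 4)) : IsOfFinOrder x := by
  by_contra hfin
  by_cases h_int : IsIntegral ℤ (x : K)
  · exact hx.not_ge (one_div_le_logHeight₁_of_isIntegral hn hK hfin h_int)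
  · have hn' : (1 : ℝ) ≤ (n : ℝ) ^ 4 := one_le_pow₀ (by exact_mod_cast hn)
    have hsmall : 1 / (2 ^ 37 * (n : ℝ) ^ 4) ≤ 1 / 2 :=
      one_div_le_one_div_of_le two_pos (by linarith)
    linarith [log_two_le_logHeight₁_of_not_isIntegral h_int, log_two_gt_d9]

end Galois

end Heights

section Relations

open Height NumberField Real

/-- The absolute logarithmic height, multiplied by `[K : ℚ]`, as a seminorm on the multiplicative
group of `K` written additively, so that multiplicative relations become linear relations
over `ℤ`. -/
def logHeightSeminorm (K : Type*) [Field K] [NumberField K] : Seminorm ℤ (Additive Kˣ) :=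
  Seminorm.of (fun a => logHeight₁ (a.toMul : K)) (fun a b => logHeight₁_mul_le _ _) fun k a => by
    rw [toMul_zsmul, Units.val_zpow_eq_zpow_val, logHeight₁_zpow, Int.norm_eq_abs, Nat.cast_natAbs,
      Int.cast_abs]

theorem linearCombination_ofMul_eq_zero_iff {G ι : Type*} [CommGroup G] [Fintype ι] {x : ι → G}
    {v : ι → ℤ} :
    Fintype.linearCombination ℤ (fun i => Additive.ofMul (x i)) v = 0 ↔ ∏ i, x i ^ v i = 1 := by
  rw [Fintype.linearCombination_apply]
  simp only [← ofMul_zpow, ← ofMul_prod, ofMul_eq_zero]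

variable {K : Type*} [Field K] [NumberField K] [IsGalois ℚ K] {n : ℕ}

theorem mem_closure_small_multiplicative_relations {ι : Type*} [Fintype ι] (hn : 1 ≤ n)
    (hK : Module.finrank ℚ K ≤ n.factorial) {μ : ι → Kˣ} {Q : ℕ}
    (hQ : 2 ^ 37 * n ^ 4 * ∑ i, logHeight₁ (μ i : K) < Q) {w : ι → ℤ} (hw : ∏ i, μ i ^ w i = 1) :
    w ∈ AddSubgroup.closure {v : ι → ℤ | ∏ i, μ i ^ v i = 1 ∧ ∀ i, |v i| ≤
      (Fintype.card ι * (Units.torsionOrder K * Q ^ (Fintype.card ι - 1)) : ℕ)} := by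
  have hgap (a : Additive Kˣ) (ha : logHeightSeminorm K a < 1 / (2 ^ 37 * n ^ 4)) :
      Units.torsionOrder K • a = 0 := by
    have hfin : IsOfFinOrder (a.toMul : K) :=
      Units.isOfFinOrder_val.mpr (isOfFinOrder_of_logHeight₁_lt hn hK ha)
    exact Additive.toMul.injective (Units.ext (pow_torsionOrder_eq_one hfin))
  have hQ' : ∑ i, logHeightSeminorm K (Additive.ofMul (μ i)) < 1 / (2 ^ 37 * n ^ 4) * Q := by
    rw [one_div_mul_eq_div, lt_div_iff₀' (by positivity)]
    exact hQ
  simpa only [linearCombination_ofMul_eq_zero_iff] using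
    mem_closure_small_relations (Units.torsionOrder_ne_zero K) hgap hQ'
      (linearCombination_ofMul_eq_zero_iff.mpr hw)

theorem log_le_logb_two {h : ℕ} : log h ≤ logb 2 h := by
  rw [logb, le_div_iff₀ (log_pos one_lt_two)]
  exact mul_le_of_le_one_right (log_natCast_nonneg h) (by linarith [log_two_lt_d9])

theorem one_le_logb_two {h : ℕ} (hh : 2 ≤ h) : 1 ≤ logb 2 h := by
  rw [le_logb_iff_rpow_le one_lt_two (by positivity), rpow_one]
  exact_mod_cast hh

theorem exists_nat_lt_and_le {h : ℕ} (hn : 1 ≤ n) (hh : 2 ≤ h) :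
    ∃ Q : ℕ, 2 ^ 37 * n ^ 4 * (n * (n.factorial * (6 * n ^ 2 * log h))) < Q ∧
      Q ≤ 2 ^ 41 * (n ^ 7 * n.factorial * logb 2 h) := by
  have hlog : 0 < log h := log_pos (by exact_mod_cast hh)
  have hX : 1 ≤ n ^ 7 * n.factorial * logb 2 h :=
    one_le_mul_of_one_le_of_one_le
      (by exact_mod_cast Nat.one_le_iff_ne_zero.mpr (by positivity)) (one_le_logb_two hh)
  refine ⟨⌈2 ^ 40 * (n ^ 7 * n.factorial * logb 2 h)⌉₊, ?_, ?_⟩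
  · refine lt_of_lt_of_le ?_ (Nat.le_ceil _)
    calc 2 ^ 37 * n ^ 4 * (n * (n.factorial * (6 * n ^ 2 * log h)))
        = 6 * 2 ^ 37 * (n ^ 7 * n.factorial * log h) := by ring
      _ < 2 ^ 40 * (n ^ 7 * n.factorial * log h) := by gcongr; norm_num
      _ ≤ 2 ^ 40 * (n ^ 7 * n.factorial * logb 2 h) := by
          gcongr
          exact log_le_logb_two
  · linarith [Nat.ceil_lt_add_one (by positivity : 0 ≤ 2 ^ 40 * (n ^ 7 * n.factorial * logb 2 h))]

theorem mul_mul_pow_pred_le {h W Q : ℕ} (hn : 1 ≤ n) (hh : 2 ≤ h)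
    (hW : W ≤ n.factorial * (2 * n ^ 2 + 3))
    (hQ : Q ≤ 2 ^ 41 * (n ^ 7 * n.factorial * logb 2 h)) :
    (n * (W * Q ^ (n - 1)) : ℝ) ≤ (2 ^ 41 * n ^ 7 * n.factorial * logb 2 h) ^ n := by
  have hn' : (1 : ℝ) ≤ n := by exact_mod_cast hn
  have hlog := one_le_logb_two hh
  have hnW : (n * W : ℝ) ≤ 2 ^ 41 * (n ^ 7 * n.factorial * logb 2 h) := by
    calc (n * W : ℝ) ≤ n * (n.factorial * (2 * n ^ 2 + 3)) := by
          gcongr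
          exact_mod_cast hW
      _ ≤ n * (n.factorial * (5 * n ^ 2)) := by
          gcongr
          nlinarith
      _ = 5 * (n ^ 3 * n.factorial * 1) := by ring
      _ ≤ 2 ^ 41 * (n ^ 7 * n.factorial * logb 2 h) := by
          gcongr <;> norm_num
  calc (n * (W * Q ^ (n - 1)) : ℝ) = n * W * Q ^ (n - 1) := (mul_assoc _ _ _).symm
    _ ≤ 2 ^ 41 * (n ^ 7 * n.factorial * logb 2 h) *
          (2 ^ 41 * (n ^ 7 * n.factorial * logb 2 h)) ^ (n - 1) := by gcongr
    _ = (2 ^ 41 * n ^ 7 * n.factorial * logb 2 h) ^ n := by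
        rw [mul_pow_sub_one (by omega)]
        ring

theorem mem_closure_multiplicative_relations_of_logHeight₁_le {h : ℕ} (hn : 1 ≤ n) (hh : 2 ≤ h)
    (hK : Module.finrank ℚ K ≤ n.factorial) {μ : Fin n → Kˣ}
    (hμ : ∀ i, logHeight₁ (μ i : K) ≤ Module.finrank ℚ K * (6 * n ^ 2 * log h)) {w : Fin n → ℤ}
    (hw : ∏ i, μ i ^ w i = 1) :
    w ∈ AddSubgroup.closure {v : Fin n → ℤ | ∏ i, μ i ^ v i = 1 ∧ ∀ i, |(v i : ℝ)| ≤
      (2 ^ 41 * n ^ 7 * n.factorial * logb 2 h) ^ n} := by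
  obtain ⟨Q, hQ, hQ_le⟩ := exists_nat_lt_and_le hn hh
  have hsum : ∑ i, logHeight₁ (μ i : K) ≤ n * (n.factorial * (6 * n ^ 2 * log h)) := by
    calc ∑ i, logHeight₁ (μ i : K) ≤ ∑ _i : Fin n, n.factorial * (6 * n ^ 2 * log h) := by
          gcongr with i
          exact (hμ i).trans (by gcongr)
      _ = n * (n.factorial * (6 * n ^ 2 * log h)) := by
          rw [Finset.sum_const, Finset.card_univ, Fintype.card_fin, nsmul_eq_mul]
  have hQ_sum : 2 ^ 37 * n ^ 4 * ∑ i, logHeight₁ (μ i : K) < Q := lt_of_le_of_lt (by gcongr) hQ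
  have hW := le_factorial_mul_of_totient_le_factorial ((totient_torsionOrder_le_finrank K).trans hK)
  refine AddSubgroup.closure_mono ?_ (mem_closure_small_multiplicative_relations hn hK hQ_sum hw)
  rintro v ⟨hv, hv_le⟩
  refine ⟨hv, fun i => le_trans ?_ (mul_mul_pow_pred_le hn hh hW hQ_le)⟩
  have hvi := hv_le i
  rw [Fintype.card_fin] at hvi
  exact_mod_cast hvi

end Relations

section Matrices

open Height NumberField Real

theorem abs_le_ratHeight (q : ℚ) : |q| ≤ ratHeight q := by
  calc |q| ≤ |q| * q.den :=
        le_mul_of_one_le_right (abs_nonneg q) (by exact_mod_cast q.den_pos)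
    _ = |(q.num : ℚ)| := by rw [← Rat.mul_den_eq_num q, abs_mul, Nat.abs_cast]
    _ ≤ ratHeight q := by
        rw [← Int.cast_abs, Int.abs_eq_natAbs]
        exact_mod_cast le_max_left _ _

theorem norm_intCast_le_of_map_eq_smul {ι : Type*} {g : Matrix ι ι ℚ} {h δ : ℕ}
    (hg : ∀ i j, ratHeight (g i j) ≤ h) {B : Matrix ι ι ℤ}
    (hB : B.map (Int.castRingHom ℚ) = (δ : ℚ) • g) (i j : ι) : ‖(B i j : ℂ)‖ ≤ δ * h := by
  have hBij : (B i j : ℚ) = δ * g i j := congrFun₂ hB i j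
  have hle : |(B i j : ℚ)| ≤ δ * h := by
    rw [hBij, abs_mul, Nat.abs_cast]
    gcongr
    exact (abs_le_ratHeight _).trans (by exact_mod_cast hg i j)
  rw [Complex.norm_intCast]
  exact_mod_cast hle

variable {ι : Type*} [Fintype ι]

theorem exists_int_matrix_eq_smul_of_ratHeight_le {g : Matrix ι ι ℚ} {h : ℕ}
    (hg : ∀ i j, ratHeight (g i j) ≤ h) :
    ∃ (δ : ℕ) (B : Matrix ι ι ℤ), δ ≠ 0 ∧ δ ≤ h ^ Fintype.card ι ^ 2 ∧
      B.map (Int.castRingHom ℚ) = (δ : ℚ) • g := by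
  have hdvd (i j : ι) : (g i j).den ∣ ∏ i, ∏ j, (g i j).den :=
    (Finset.dvd_prod_of_mem (fun j => (g i j).den) (Finset.mem_univ j)).trans
      (Finset.dvd_prod_of_mem (fun i => ∏ j, (g i j).den) (Finset.mem_univ i))
  choose e he using hdvd
  refine ⟨∏ i, ∏ j, (g i j).den, Matrix.of fun i j => e i j * (g i j).num, ?_, ?_, ?_⟩
  · exact Finset.prod_ne_zero_iff.mpr fun i _ => Finset.prod_ne_zero_iff.mpr fun j _ =>
      (g i j).den_nz
  · calc ∏ i, ∏ j, (g i j).den ≤ ∏ _i : ι, ∏ _j : ι, h :=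
          Finset.prod_le_prod' fun i _ => Finset.prod_le_prod' fun j _ =>
            (le_max_right _ _).trans (hg i j)
      _ = h ^ Fintype.card ι ^ 2 := by simp [← pow_mul, sq]
  · ext i j
    rw [Matrix.smul_apply, smul_eq_mul, he i j, Matrix.map_apply, Matrix.of_apply, map_mul,
      eq_intCast, eq_intCast, ← Rat.den_mul_eq_num, Nat.cast_mul, Int.cast_natCast]
    ring

variable [DecidableEq ι]

theorem isRoot_charpoly_smul {R : Type*} [CommRing R] {A : Matrix ι ι R} {a : R}
    (h : A.charpoly.IsRoot a) (c : R) : (c • A).charpoly.IsRoot (c * a) := by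
  rw [Polynomial.IsRoot, Matrix.eval_charpoly] at h ⊢
  have hscalar : Matrix.scalar ι (c * a) = c • Matrix.scalar ι a := by
    ext i j
    simp [Matrix.diagonal_apply]
  rw [hscalar, ← smul_sub, Matrix.det_smul, h, mul_zero]

theorem ne_zero_of_isRoot_charpoly {R F : Type*} [CommRing R] [Field F] [Algebra R F]
    (g : GL ι R) {a : F}
    (ha : ((g : Matrix ι ι R).charpoly.map (algebraMap R F)).IsRoot a) : a ≠ 0 := by
  rintro rfl
  rw [← Matrix.charpoly_map, ← Matrix.mem_spectrum_iff_isRoot_charpoly] at ha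
  exact spectrum.zero_notMem F (g.isUnit.map (algebraMap R F).mapMatrix) ha

theorem norm_le_card_mul_of_isRoot_charpoly {𝕜 : Type*} [NormedField 𝕜] {A : Matrix ι ι 𝕜} {a : 𝕜}
    (h : A.charpoly.IsRoot a) {b : ℝ} (hA : ∀ i j, ‖A i j‖ ≤ b) : ‖a‖ ≤ Fintype.card ι * b := by
  rw [← Matrix.mem_spectrum_iff_isRoot_charpoly, ← Matrix.spectrum_toLin',
    ← Module.End.hasEigenvalue_iff_mem_spectrum] at h
  obtain ⟨k, hk⟩ := eigenvalue_mem_ball h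
  calc ‖a‖ = ‖A k k + (a - A k k)‖ := by rw [add_sub_cancel]
    _ ≤ ‖A k k‖ + ∑ j ∈ Finset.univ.erase k, ‖A k j‖ :=
        (norm_add_le _ _).trans (by gcongr; exact mem_closedBall_iff_norm.mp hk)
    _ = ∑ j, ‖A k j‖ := Finset.add_sum_erase _ (fun j => ‖A k j‖) (Finset.mem_univ k)
    _ ≤ Fintype.card ι * b := by
        rw [← nsmul_eq_mul]
        exact Finset.sum_le_card_nsmul _ _ _ fun j _ => hA k j

theorem log_mul_pow_le {n h : ℕ} (hn : 1 ≤ n) (hh : 2 ≤ h) :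
    log (n * h ^ (n ^ 2 + 1)) ≤ 3 * n ^ 2 * log h := by
  have hle : n * h ^ (n ^ 2 + 1) ≤ h ^ (3 * n ^ 2) := by
    calc n * h ^ (n ^ 2 + 1) ≤ h ^ n * h ^ (n ^ 2 + 1) :=
          Nat.mul_le_mul_right _ (Nat.lt_two_pow_self.le.trans (Nat.pow_le_pow_left hh n))
      _ = h ^ (n + (n ^ 2 + 1)) := (pow_add _ _ _).symm
      _ ≤ h ^ (3 * n ^ 2) := Nat.pow_le_pow_right (by omega) (by nlinarith)
  calc log (n * h ^ (n ^ 2 + 1)) ≤ log (h ^ (3 * n ^ 2)) :=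
        log_le_log (by positivity) (by exact_mod_cast hle)
    _ = 3 * n ^ 2 * log h := by
        rw [log_pow]
        push_cast
        ring

variable {K : Type*} [Field K] [NumberField K]

theorem logHeight₁_le_of_isRoot_charpoly [Nonempty ι] {g : Matrix ι ι ℚ} {h : ℕ} (hh : 2 ≤ h)
    (hg : ∀ i j, ratHeight (g i j) ≤ h) {a : K}
    (ha : (g.charpoly.map (algebraMap ℚ K)).IsRoot a) :
    logHeight₁ a ≤ Module.finrank ℚ K * (6 * Fintype.card ι ^ 2 * log h) := by
  obtain ⟨δ, B, hδ, hδ_le, hB⟩ := exists_int_matrix_eq_smul_of_ratHeight_le hg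
  set n := Fintype.card ι
  have hn : 1 ≤ n := Fintype.card_pos
  have hroot : (B.charpoly.map (Int.castRingHom K)).IsRoot (δ * a) := by
    have hBK : B.map (Int.castRingHom K) = (δ : K) • g.map (algebraMap ℚ K) := by
      ext i j
      simpa using congrArg (algebraMap ℚ K) (congrFun₂ hB i j)
    rw [← Matrix.charpoly_map, hBK]
    exact isRoot_charpoly_smul (by rwa [Matrix.charpoly_map]) _
  have h_int : IsIntegral ℤ (δ * a) :=
    ⟨B.charpoly, B.charpoly_monic, by rwa [← Polynomial.eval_map]⟩
  have hδh : δ * h ≤ h ^ (n ^ 2 + 1) := Nat.mul_le_mul_right h hδ_le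
  have hδ_bound : (δ : ℝ) ≤ n * h ^ (n ^ 2 + 1) := by
    exact_mod_cast (Nat.le_mul_of_pos_right δ (by omega)).trans
      (hδh.trans (Nat.le_mul_of_pos_left _ hn))
  have hnorm (σ : K →+* ℂ) : ‖σ (δ * a)‖ ≤ n * h ^ (n ^ 2 + 1) := by
    have hrootσ : (B.map (Int.castRingHom ℂ)).charpoly.IsRoot (σ (δ * a)) := by
      rw [Matrix.charpoly_map, Subsingleton.elim (Int.castRingHom ℂ) (σ.comp (Int.castRingHom K)),
        ← Polynomial.map_map]
      exact hroot.map
    exact norm_le_card_mul_of_isRoot_charpoly hrootσ fun i j =>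
      (norm_intCast_le_of_map_eq_smul hg hB i j).trans (by exact_mod_cast hδh)
  calc logHeight₁ a ≤ Module.finrank ℚ K * (2 * log (n * h ^ (n ^ 2 + 1))) :=
        logHeight₁_le_of_isIntegral_natCast_mul hδ h_int hδ_bound hnorm
    _ ≤ Module.finrank ℚ K * (2 * (3 * n ^ 2 * log h)) := by
        gcongr
        exact log_mul_pow_le hn hh
    _ = Module.finrank ℚ K * (6 * n ^ 2 * log h) := by ring

end Matrices

section SplittingField

open Polynomial

variable {F : Type*} [Field F] [CharZero F]

theorem finrank_splittingField_le_factorial (p : F[X]) :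
    Module.finrank F p.SplittingField ≤ p.natDegree.factorial := by
  classical
  have : Fact (p.map (algebraMap F p.SplittingField)).Splits := ⟨SplittingField.splits p⟩
  have : IsGalois F p.SplittingField := IsGalois.mk
  have hcard : Fintype.card (p.rootSet p.SplittingField) ≤ p.natDegree := by
    simp_rw [rootSet_def, Finset.coe_sort_coe, Fintype.card_coe, aroots_def]
    exact (Multiset.toFinset_card_le _).trans ((card_roots' _).trans natDegree_map_le)
  calc Module.finrank F p.SplittingField = Nat.card p.Gal :=
        (IsGalois.card_aut_eq_finrank F p.SplittingField).symm
    _ ≤ Nat.card (Equiv.Perm (p.rootSet p.SplittingField)) :=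
        Nat.card_le_card_of_injective _ (Gal.galActionHom_injective p p.SplittingField)
    _ = (Fintype.card (p.rootSet p.SplittingField)).factorial := by
        rw [Nat.card_eq_fintype_card, Fintype.card_perm]
    _ ≤ p.natDegree.factorial := Nat.factorial_le hcard

theorem finrank_le_factorial_of_isSplittingField {E : Type*} [Field E] [Algebra F E] (p : F[X])
    [IsSplittingField F E p] : Module.finrank F E ≤ p.natDegree.factorial := by
  rw [(IsSplittingField.algEquiv E p).toLinearEquiv.finrank_eq]
  exact finrank_splittingField_le_factorial p

theorem exists_isGalois_intermediateField_of_splits {L : Type*} [Field L] [CharZero L] {p : ℚ[X]}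
    (hp : (p.map (algebraMap ℚ L)).Splits) :
    ∃ K : IntermediateField ℚ L, NumberField K ∧ IsGalois ℚ K ∧
      Module.finrank ℚ K ≤ p.natDegree.factorial ∧ p.rootSet L ⊆ K := by
  have : IsSplittingField ℚ (IntermediateField.adjoin ℚ (p.rootSet L)) p :=
    IntermediateField.adjoin_rootSet_isSplittingField hp
  have : FiniteDimensional ℚ (IntermediateField.adjoin ℚ (p.rootSet L)) :=
    IsSplittingField.finiteDimensional _ p
  exact ⟨_, ⟨⟩, { to_normal := Normal.of_isSplittingField p },
    finrank_le_factorial_of_isSplittingField p, IntermediateField.subset_adjoin ℚ _⟩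

end SplittingField

section Eigenvalues

open Height Polynomial

theorem stmt14_general {F : Type*} [Field F] [CharZero F] {n h : ℕ} (hn : 1 ≤ n) (hh : 2 ≤ h)
    {g : GL (Fin n) ℚ} (hg : ∀ i j, ratHeight ((g : Matrix (Fin n) (Fin n) ℚ) i j) ≤ h)
    {lam : Fin n → F}
    (hlam : (g : Matrix (Fin n) (Fin n) ℚ).charpoly.map (algebraMap ℚ F) =
      ∏ i, (X - C (lam i))) {w : Fin n → ℤ} (hw : ∏ i, lam i ^ w i = 1) :
    w ∈ AddSubgroup.closure {v : Fin n → ℤ | ∏ i, lam i ^ v i = 1 ∧ ∀ i, |(v i : ℝ)| ≤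
      (2 ^ 41 * n ^ 7 * n.factorial * Real.logb 2 h) ^ n} := by
  set p := (g : Matrix (Fin n) (Fin n) ℚ).charpoly
  have hsplits : (p.map (algebraMap ℚ F)).Splits := by
    rw [hlam]
    exact Splits.prod fun i _ => Splits.X_sub_C (lam i)
  have hroot (i : Fin n) : (p.map (algebraMap ℚ F)).IsRoot (lam i) := by
    rw [hlam, isRoot_prod]
    exact ⟨i, Finset.mem_univ i, root_X_sub_C.mpr rfl⟩
  obtain ⟨K, _, _, hK, hK_mem⟩ := exists_isGalois_intermediateField_of_splits hsplits
  rw [Matrix.charpoly_natDegree_eq_dim, Fintype.card_fin] at hK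
  have hlam_mem (i : Fin n) : lam i ∈ K := by
    refine hK_mem ?_
    rw [mem_rootSet_of_ne (Matrix.charpoly_monic _).ne_zero, ← eval_map_algebraMap]
    exact hroot i
  have hμ_root (i : Fin n) : (p.map (algebraMap ℚ K)).IsRoot ⟨lam i, hlam_mem i⟩ := by
    refine IsRoot.of_map (f := algebraMap K F) ?_ (algebraMap K F).injective
    rw [map_map, Subsingleton.elim ((algebraMap K F).comp (algebraMap ℚ K)) (algebraMap ℚ F)]
    exact hroot i
  let μ (i : Fin n) : Kˣ := Units.mk0 _ (ne_zero_of_isRoot_charpoly g (hμ_root i))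
  have hrel (v : Fin n → ℤ) : ∏ i, lam i ^ v i = 1 ↔ ∏ i, μ i ^ v i = 1 := by
    rw [← Units.val_inj, ← (algebraMap K F).injective.eq_iff]
    simp [μ]
  have : Nonempty (Fin n) := ⟨0, hn⟩
  have hμ_height (i : Fin n) : logHeight₁ (μ i : K) ≤
      Module.finrank ℚ K * (6 * n ^ 2 * Real.log h) := by
    rw [← Fintype.card_fin n]
    exact logHeight₁_le_of_isRoot_charpoly hh hg (hμ_root i)
  simp only [hrel] at hw ⊢
  exact mem_closure_multiplicative_relations_of_logHeight₁_le hn hh hK hμ_height hw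

end Eigenvalues

/-- **Multiplicative relations between eigenvalues** (corollary of Masser's theorem):
there is an absolute constant `c` such that for all `n ≥ 1` and all `g ∈ GL_n(ℚ)` with
entries of height at most `h ≥ 2` and eigenvalues `λ₁,…,λ_n ∈ ℚ̄`, the group
`L = {k ∈ ℤⁿ : λ₁^{k₁}⋯λ_n^{k_n} = 1}` is generated, as an additive subgroup of `ℤⁿ`, by
vectors whose entries have absolute value at most `(c·n⁷·n!·log₂ h)^n`. -/
theorem stmt14 :
    ∃ c : ℕ, ∀ n : ℕ, 1 ≤ n → ∀ h : ℕ, 2 ≤ h → ∀ g : GL (Fin n) ℚ,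
      (∀ i j, ratHeight ((g : Matrix (Fin n) (Fin n) ℚ) i j) ≤ h) →
      ∀ lam : Fin n → Qbar,
      (Matrix.charpoly (g : Matrix (Fin n) (Fin n) ℚ)).map (algebraMap ℚ Qbar) =
        ∏ i : Fin n, (Polynomial.X - Polynomial.C (lam i)) →
      ∃ T : Set (Fin n → ℤ),
        (∀ v ∈ T, ∀ i, |(v i : ℝ)| ≤
          ((c : ℝ) * n ^ 7 * n.factorial * Real.logb 2 h) ^ n) ∧
        (∀ v ∈ T, ∏ i, lam i ^ v i = 1) ∧
        (∀ w : Fin n → ℤ, ∏ i, lam i ^ w i = 1 → w ∈ AddSubgroup.closure T) :=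
  ⟨2 ^ 41, fun _ hn _ hh _ hg _ hlam =>
    ⟨_, fun _ hv => mod_cast hv.2, fun _ hv => hv.1, fun _ => stmt14_general hn hh hg hlam⟩⟩
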